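/- arXiv:0704.3327 — 8 statements merged into one kernel-verified Lean document; each statement's English description precedes it below -/
import Mathlib

section
/- Let k be a field, X a scheme of finite type over k, and m a natural number. Then the contravariant functor F_m^X from the category of k-schemes to the category of sets, defined by F_m^X(Z) = Hom_k(Z ×_{Spec k} Spec(k[t]/(t^{m+1})), X), is representable by a scheme X_m of finite type over k; that is, there exist a k-scheme X_m of finite type over k and a morphism u : X_m ×_{Spec k} Spec(k[t]/(t^{m+1})) → X such that for every k-scheme Z the map Hom_k(Z, X_m) → F_m^X(Z), g ↦ u ∘ (g × id), is bijective. -/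
open AlgebraicGeometry CategoryTheory Limits

noncomputable section

variable (k : Type) [Field k] (m : ℕ)

/-- The ring `k[t]/(t^{m+1})`. -/
abbrev JetRing : Type := Polynomial k ⧸ Ideal.span {(Polynomial.X : Polynomial k) ^ (m + 1)}

/-- `Spec k`. -/
abbrev Speck := Spec (CommRingCat.of k)

/-- `Spec (k[t]/(t^{m+1}))`. -/
abbrev JetSpec := Spec (CommRingCat.of (JetRing k m))

/-- The structure morphism `Spec (k[t]/(t^{m+1})) → Spec k`. -/
def jetStruct : JetSpec k m ⟶ Speck k :=
  Spec.map (CommRingCat.ofHom (algebraMap k (JetRing k m)))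

/-- Evaluation at `t = 0`, `k[t]/(t^{m+1}) → k`, as a `k`-algebra homomorphism. -/
def jetEvalAlgHom : JetRing k m →ₐ[k] k :=
  Ideal.Quotient.liftₐ _ ((Polynomial.aeval (0 : k)).restrictScalars k)
    (by
      intro p hp
      rw [Ideal.mem_span_singleton] at hp
      obtain ⟨q, rfl⟩ := hp
      simp)

/-- The `k`-point `t = 0` of `Spec (k[t]/(t^{m+1}))`. -/
def jetZero : Speck k ⟶ JetSpec k m :=
  Spec.map (CommRingCat.ofHom (jetEvalAlgHom k m).toRingHom)

lemma jetZero_jetStruct : jetZero k m ≫ jetStruct k m = 𝟙 (Speck k) := by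
  rw [jetZero, jetStruct, ← Spec.map_comp, ← Spec.map_id]
  congr 1
  ext c
  simpa using (jetEvalAlgHom k m).commutes c

end

open AlgebraicGeometry CategoryTheory Limits
open TensorProduct

section JetAlgebra

lemma jetAux_repr_map {k R P C ι : Type} [Field k] [CommRing R] [Algebra k R] [CommRing P] [Algebra k P]
    [CommRing C] [Algebra k C] (b : Module.Basis ι k R) (f : P →ₐ[k] C) (x : P ⊗[k] R) (i : ι) :
    (Algebra.TensorProduct.basis C b).repr (Algebra.TensorProduct.map f (AlgHom.id k R) x) i =
      f ((Algebra.TensorProduct.basis P b).repr x i) := by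
  induction x with
  | zero => simp
  | tmul a r => simp
  | add x y hx hy => simp [hx, hy]

lemma jetAux_algebra {k R ι : Type} [Field k] [CommRing R] [Algebra k R] [Fintype ι]
    (b : Module.Basis ι k R) (A : Type) [CommRing A] [Algebra k A] [Algebra.FiniteType k A] :
    ∃ (B : Type) (_ : CommRing B) (_ : Algebra k B) (_ : Algebra.FiniteType k B)
      (υ : A →ₐ[k] B ⊗[k] R), ∀ (C : Type) [CommRing C] [Algebra k C] (h : A →ₐ[k] C ⊗[k] R),
        ∃! f : B →ₐ[k] C, (Algebra.TensorProduct.map f (AlgHom.id k R)).comp υ = h := by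
  obtain ⟨n, π, hπ⟩ := Algebra.FiniteType.iff_quotient_mvPolynomial''.mp
    (inferInstance : Algebra.FiniteType k A)
  let P := MvPolynomial (Fin n × ι) k
  let bP := Algebra.TensorProduct.basis P b
  let υ0 : MvPolynomial (Fin n) k →ₐ[k] P ⊗[k] R :=
    MvPolynomial.aeval fun s => ∑ i, (MvPolynomial.X (s, i) : P) ⊗ₜ[k] b i
  let I : Ideal P := Ideal.span {c | ∃ q i, π q = 0 ∧ c = bP.repr (υ0 q) i}
  let B := P ⧸ I
  let mk : P →ₐ[k] B := Ideal.Quotient.mkₐ k I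
  let υ1 : MvPolynomial (Fin n) k →ₐ[k] B ⊗[k] R :=
    (Algebra.TensorProduct.map mk (AlgHom.id k R)).comp υ0
  have hυ1 : ∀ q, π q = 0 → υ1 q = 0 := by
    intro q hq
    apply (Algebra.TensorProduct.basis B b).ext_elem
    intro i
    simp only [υ1, AlgHom.comp_apply, jetAux_repr_map, map_zero, Finsupp.zero_apply]
    exact Ideal.Quotient.eq_zero_iff_mem.mpr (Ideal.subset_span ⟨q, i, hq, rfl⟩)
  have hυ0 : ∀ s i, bP.repr (υ0 (MvPolynomial.X s)) i = MvPolynomial.X (s, i) := by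
    intro s i
    classical
    simp [υ0, bP, Finsupp.single_apply]
  let υ : A →ₐ[k] B ⊗[k] R :=
    (Ideal.Quotient.liftₐ (RingHom.ker π) υ1 (fun q hq => hυ1 q hq)).comp
      (Ideal.quotientKerAlgEquivOfSurjective hπ).symm.toAlgHom
  have hυ : ∀ q, υ (π q) = υ1 q := by
    intro q
    have : (Ideal.quotientKerAlgEquivOfSurjective hπ).symm (π q) = Ideal.Quotient.mk _ q := by
      rw [AlgEquiv.symm_apply_eq]; rfl
    simp only [υ, AlgHom.comp_apply, AlgEquiv.toAlgHom_apply]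
    erw [this]
    rfl
  refine ⟨B, inferInstance, inferInstance, inferInstance, υ, ?_⟩
  intro C _ _ h
  let bC := Algebra.TensorProduct.basis C b
  let f0 : P →ₐ[k] C := MvPolynomial.aeval fun si => bC.repr (h (π (MvPolynomial.X si.1))) si.2
  have hf0 : (Algebra.TensorProduct.map f0 (AlgHom.id k R)).comp υ0 = h.comp π := by
    apply MvPolynomial.algHom_ext
    intro s
    apply bC.ext_elem
    intro i
    simp only [AlgHom.comp_apply, bC, jetAux_repr_map]
    erw [hυ0]
    exact MvPolynomial.aeval_X _ _
  have hf0' : ∀ a ∈ I, f0 a = 0 := by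
    intro a ha
    change a ∈ RingHom.ker f0
    revert a
    change I ≤ _
    rw [Ideal.span_le]
    rintro c ⟨q, i, hq, rfl⟩
    change f0 _ = 0
    rw [← jetAux_repr_map, ← AlgHom.comp_apply, hf0]
    simp [hq]
  let f : B →ₐ[k] C := Ideal.Quotient.liftₐ I f0 hf0'
  have hfmk : f.comp mk = f0 := AlgHom.ext fun _ => rfl
  have key : ∀ g : B →ₐ[k] C, ((Algebra.TensorProduct.map g (AlgHom.id k R)).comp υ).comp π =
      (Algebra.TensorProduct.map (g.comp mk) (AlgHom.id k R)).comp υ0 := by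
    intro g
    apply AlgHom.ext
    intro q
    simp only [AlgHom.comp_apply, hυ, υ1]
    rw [← AlgHom.comp_apply, ← Algebra.TensorProduct.map_comp]
    rfl
  refine ⟨f, ?_, ?_⟩
  · apply AlgHom.ext
    intro a
    obtain ⟨q, rfl⟩ := hπ a
    have := DFunLike.congr_fun ((key f).trans (by rw [hfmk, hf0])) q
    exact this
  · intro g hg
    have h1 := key g
    rw [hg, ← hf0] at h1
    apply Ideal.Quotient.algHom_ext
    change g.comp mk = f.comp mk
    rw [hfmk]
    apply MvPolynomial.algHom_ext
    rintro ⟨s, i⟩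
    rw [← hυ0, ← jetAux_repr_map, ← jetAux_repr_map, ← AlgHom.comp_apply, ← h1]
    rfl

end JetAlgebra
open AlgebraicGeometry CategoryTheory Limits

section JetGeometry
variable {S J : Scheme.{0}} (p : J ⟶ S)

/-- functoriality of `Z ↦ Z ×_S J`. -/
noncomputable def jmap {Z Y : Scheme.{0}} (sZ : Z ⟶ S) (sY : Y ⟶ S) (g : Z ⟶ Y)
    (hg : g ≫ sY = sZ) : pullback sZ p ⟶ pullback sY p :=
  pullback.lift (pullback.fst sZ p ≫ g) (pullback.snd sZ p)
    (by rw [Category.assoc, hg, pullback.condition])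

@[simp]
lemma jmap_fst {Z Y : Scheme.{0}} (sZ : Z ⟶ S) (sY : Y ⟶ S) (g : Z ⟶ Y) (hg : g ≫ sY = sZ) :
    jmap p sZ sY g hg ≫ pullback.fst sY p = pullback.fst sZ p ≫ g :=
  pullback.lift_fst _ _ _

@[simp]
lemma jmap_fst_assoc {Z Y W : Scheme.{0}} (sZ : Z ⟶ S) (sY : Y ⟶ S) (g : Z ⟶ Y)
    (hg : g ≫ sY = sZ) (q : Y ⟶ W) :
    jmap p sZ sY g hg ≫ pullback.fst sY p ≫ q = pullback.fst sZ p ≫ g ≫ q := by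
  rw [← Category.assoc, jmap_fst, Category.assoc]

@[simp]
lemma jmap_snd {Z Y : Scheme.{0}} (sZ : Z ⟶ S) (sY : Y ⟶ S) (g : Z ⟶ Y) (hg : g ≫ sY = sZ) :
    jmap p sZ sY g hg ≫ pullback.snd sY p = pullback.snd sZ p :=
  pullback.lift_snd _ _ _

lemma jmap_comp {Z Y W : Scheme.{0}} (sZ : Z ⟶ S) (sY : Y ⟶ S) (sW : W ⟶ S)
    (g : Z ⟶ Y) (hg : g ≫ sY = sZ) (g' : Y ⟶ W) (hg' : g' ≫ sW = sY) :
    jmap p sZ sY g hg ≫ jmap p sY sW g' hg' =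
      jmap p sZ sW (g ≫ g') (by rw [Category.assoc, hg', hg]) := by
  apply pullback.hom_ext <;> simp

lemma jmap_hom_ext {Z X : Scheme.{0}} (sZ : Z ⟶ S) (𝒰 : Z.OpenCover) (a b : pullback sZ p ⟶ X)
    (h : ∀ i, jmap p (𝒰.f i ≫ sZ) sZ (𝒰.f i) rfl ≫ a = jmap p (𝒰.f i ≫ sZ) sZ (𝒰.f i) rfl ≫ b) :
    a = b := by
  apply (𝒰.pullback₁ (pullback.fst sZ p)).hom_ext
  intro (i : 𝒰.I₀)
  change pullback.fst (pullback.fst sZ p) (𝒰.f i) ≫ a =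
    pullback.fst (pullback.fst sZ p) (𝒰.f i) ≫ b
  obtain ⟨τ, hτ1, hτ2⟩ :
      ∃ τ : pullback (pullback.fst sZ p) (𝒰.f i) ⟶ pullback (𝒰.f i ≫ sZ) p,
      τ ≫ pullback.fst _ _ = pullback.snd _ _ ∧
      τ ≫ pullback.snd _ _ = pullback.fst _ _ ≫ pullback.snd _ _ :=
    ⟨pullback.lift (pullback.snd (pullback.fst sZ p) (𝒰.f i))
        (pullback.fst (pullback.fst sZ p) (𝒰.f i) ≫ pullback.snd sZ p)
        (by rw [Category.assoc, ← pullback.condition, ← pullback.condition_assoc]),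
      pullback.lift_fst _ _ _, pullback.lift_snd _ _ _⟩
  have : pullback.fst (pullback.fst sZ p) (𝒰.f i) =
      τ ≫ jmap p (𝒰.f i ≫ sZ) sZ (𝒰.f i) rfl := by
    apply pullback.hom_ext
    · rw [Category.assoc, jmap_fst, ← Category.assoc, hτ1, pullback.condition]
    · rw [Category.assoc, jmap_snd, hτ2]
  rw [this, Category.assoc, h i, Category.assoc]

lemma jtrans {Z : Scheme.{0}} (sZ : Z ⟶ S) (𝒰 : Z.OpenCover) [Category 𝒰.I₀]
    [𝒰.LocallyDirected] {i j : 𝒰.I₀} (f : i ⟶ j) :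
    Scheme.Cover.trans 𝒰 f ≫ 𝒰.f j ≫ sZ = 𝒰.f i ≫ sZ := by
  rw [← Category.assoc, Scheme.Cover.trans_map]

/-- gluing morphisms out of `Z ×_S J` along a locally directed cover of `Z`. -/
lemma jmap_glue {Z X : Scheme.{0}} (sZ : Z ⟶ S) (𝒰 : Z.OpenCover) [Category 𝒰.I₀]
    [𝒰.LocallyDirected]
    (a : ∀ i, pullback (𝒰.f i ≫ sZ) p ⟶ X)
    (h : ∀ {i j} (f : i ⟶ j), jmap p (𝒰.f i ≫ sZ) (𝒰.f j ≫ sZ) (Scheme.Cover.trans 𝒰 f)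
      (jtrans sZ 𝒰 f) ≫ a j = a i) :
    ∃ b : pullback sZ p ⟶ X, ∀ i, jmap p (𝒰.f i ≫ sZ) sZ (𝒰.f i) rfl ≫ b = a i := by
  have hτ : ∀ i, ∃ τ : pullback (pullback.fst sZ p) (𝒰.f i) ⟶ pullback (𝒰.f i ≫ sZ) p,
      τ ≫ pullback.fst _ _ = pullback.snd _ _ ∧
      τ ≫ pullback.snd _ _ = pullback.fst _ _ ≫ pullback.snd _ _ := fun i =>
    ⟨pullback.lift (pullback.snd (pullback.fst sZ p) (𝒰.f i))
        (pullback.fst (pullback.fst sZ p) (𝒰.f i) ≫ pullback.snd sZ p)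
        (by rw [Category.assoc, ← pullback.condition, ← pullback.condition_assoc]),
      pullback.lift_fst _ _ _, pullback.lift_snd _ _ _⟩
  choose τ hτ1 hτ2 using hτ
  have hσ : ∀ i, ∃ σ : pullback (𝒰.f i ≫ sZ) p ⟶ pullback (pullback.fst sZ p) (𝒰.f i),
      σ ≫ pullback.fst _ _ = jmap p (𝒰.f i ≫ sZ) sZ (𝒰.f i) rfl ∧
      σ ≫ pullback.snd _ _ = pullback.fst _ _ := fun i =>
    ⟨pullback.lift (jmap p (𝒰.f i ≫ sZ) sZ (𝒰.f i) rfl) (pullback.fst _ _) (by simp),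
      pullback.lift_fst _ _ _, pullback.lift_snd _ _ _⟩
  choose σ hσ1 hσ2 using hσ
  have hστ : ∀ i, σ i ≫ τ i = 𝟙 _ := by
    intro i
    apply pullback.hom_ext
    · rw [Category.assoc, hτ1, hσ2, Category.id_comp]
    · rw [Category.assoc, hτ2, ← Category.assoc, hσ1, Category.id_comp, jmap_snd]
  let 𝒱 : (pullback sZ p).OpenCover := 𝒰.pullback₁ (pullback.fst sZ p)
  let _ : Category 𝒱.I₀ := ‹Category 𝒰.I₀›
  let _ : 𝒱.LocallyDirected := Scheme.Cover.locallyDirectedPullbackCover 𝒰 (pullback.fst sZ p)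
  let a' : ∀ i : 𝒱.I₀, 𝒱.X i ⟶ X := fun i => τ i ≫ a i
  have ha' : ∀ {i j : 𝒱.I₀} (f : i ⟶ j), Scheme.Cover.trans 𝒱 f ≫ a' j = a' i := by
    intro (i : 𝒰.I₀) (j : 𝒰.I₀) (f : i ⟶ j)
    have : pullback.map (pullback.fst sZ p) (𝒰.f i) (pullback.fst sZ p) (𝒰.f j)
        (𝟙 _) (Scheme.Cover.trans 𝒰 f) (𝟙 _) (by simp)
        (by rw [Scheme.Cover.trans_map, Category.comp_id]) ≫ τ j =
        τ i ≫ jmap p (𝒰.f i ≫ sZ) (𝒰.f j ≫ sZ) (Scheme.Cover.trans 𝒰 f) (jtrans sZ 𝒰 f) := by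
      apply pullback.hom_ext
      · rw [Category.assoc, hτ1, Category.assoc, jmap_fst, ← Category.assoc, hτ1]
        exact pullback.lift_snd _ _ _
      · rw [Category.assoc, hτ2, Category.assoc, jmap_snd, hτ2, ← Category.assoc]
        congr 1
        exact (pullback.lift_fst _ _ _).trans (Category.comp_id _)
    change pullback.map (pullback.fst sZ p) (𝒰.f i) (pullback.fst sZ p) (𝒰.f j)
        (𝟙 _) (Scheme.Cover.trans 𝒰 f) (𝟙 _) (by simp)
        (by rw [Scheme.Cover.trans_map, Category.comp_id]) ≫ τ j ≫ a j = τ i ≫ a i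
    rw [← Category.assoc, this, Category.assoc, h f]
  refine ⟨Scheme.OpenCover.glueMorphismsOfLocallyDirected 𝒱 a' ha', ?_⟩
  intro i
  rw [← hσ1, Category.assoc]
  have := Scheme.OpenCover.map_glueMorphismsOfLocallyDirected 𝒱 a' ha' i
  refine (congrArg (σ i ≫ ·) this).trans ?_
  change σ i ≫ τ i ≫ a i = _
  rw [← Category.assoc, hστ, Category.id_comp]

/-- The universal property of the jet scheme. -/
structure IsJet {X Y : Scheme.{0}} (sX : X ⟶ S) (sY : Y ⟶ S) (u : pullback sY p ⟶ X) : Prop where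
  w : u ≫ sX = pullback.fst sY p ≫ sY
  ex : ∀ (Z : Scheme.{0}) (sZ : Z ⟶ S) (h : pullback sZ p ⟶ X),
    h ≫ sX = pullback.fst sZ p ≫ sZ → ∃ g, ∃ hg : g ≫ sY = sZ, jmap p sZ sY g hg ≫ u = h
  uniq : ∀ (Z : Scheme.{0}) (sZ : Z ⟶ S) (g g' : Z ⟶ Y) (hg : g ≫ sY = sZ) (hg' : g' ≫ sY = sZ),
    jmap p sZ sY g hg ≫ u = jmap p sZ sY g' hg' ≫ u → g = g'

lemma jet_ex_of_cover {X Y : Scheme.{0}} (sY : Y ⟶ S) (u : pullback sY p ⟶ X)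
    (uniq : ∀ (Z : Scheme.{0}) (sZ : Z ⟶ S) (g g' : Z ⟶ Y) (hg : g ≫ sY = sZ) (hg' : g' ≫ sY = sZ),
      jmap p sZ sY g hg ≫ u = jmap p sZ sY g' hg' ≫ u → g = g')
    {Z : Scheme.{0}} (sZ : Z ⟶ S) (h : pullback sZ p ⟶ X) (𝒰 : Z.OpenCover)
    (H : ∀ i, ∃ g, ∃ hg : g ≫ sY = 𝒰.f i ≫ sZ, jmap p (𝒰.f i ≫ sZ) sY g hg ≫ u =
      jmap p (𝒰.f i ≫ sZ) sZ (𝒰.f i) rfl ≫ h) :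
    ∃ g, ∃ hg : g ≫ sY = sZ, jmap p sZ sY g hg ≫ u = h := by
  choose g hg hgu using H
  have hc : ∀ i j, pullback.fst (𝒰.f i) (𝒰.f j) ≫ g i = pullback.snd (𝒰.f i) (𝒰.f j) ≫ g j := by
    intro i j
    have e1 : pullback.snd (𝒰.f i) (𝒰.f j) ≫ 𝒰.f j ≫ sZ =
      pullback.fst (𝒰.f i) (𝒰.f j) ≫ 𝒰.f i ≫ sZ := (pullback.condition_assoc _).symm
    apply uniq _ (pullback.fst (𝒰.f i) (𝒰.f j) ≫ 𝒰.f i ≫ sZ) _ _ (by simp [hg])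
      (by simp [hg, e1])
    rw [← jmap_comp p _ (𝒰.f i ≫ sZ) _ _ rfl _ (hg i),
      ← jmap_comp p _ (𝒰.f j ≫ sZ) _ _ e1 _ (hg j), Category.assoc, Category.assoc, hgu, hgu]
    refine (Category.assoc _ _ _).symm.trans (Eq.trans ?_ (Category.assoc _ _ _))
    rw [jmap_comp, jmap_comp]
    simp only [pullback.condition]
  have e : 𝒰.glueMorphisms g hc ≫ sY = sZ := by
    apply 𝒰.hom_ext
    intro i
    simp [hg]
  refine ⟨𝒰.glueMorphisms g hc, e, ?_⟩
  apply jmap_hom_ext p sZ 𝒰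
  intro i
  rw [← hgu, ← Category.assoc, jmap_comp]
  simp

lemma IsJet.of_affine {X Y : Scheme.{0}} (sX : X ⟶ S) (sY : Y ⟶ S) (u : pullback sY p ⟶ X)
    (w : u ≫ sX = pullback.fst sY p ≫ sY)
    (H : ∀ (C : CommRingCat.{0}) (sZ : Spec C ⟶ S) (h : pullback sZ p ⟶ X),
      h ≫ sX = pullback.fst sZ p ≫ sZ →
        (∃ g, ∃ hg : g ≫ sY = sZ, jmap p sZ sY g hg ≫ u = h) ∧
        ∀ (g g' : Spec C ⟶ Y) (hg : g ≫ sY = sZ) (hg' : g' ≫ sY = sZ),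
          jmap p sZ sY g hg ≫ u = h → jmap p sZ sY g' hg' ≫ u = h → g = g') :
    IsJet p sX sY u := by
  have H' : ∀ (W : Scheme.{0}) (i : W.affineCover.I₀) (sZ : W.affineCover.X i ⟶ S)
      (h : pullback sZ p ⟶ X),
      h ≫ sX = pullback.fst sZ p ≫ sZ →
        (∃ g, ∃ hg : g ≫ sY = sZ, jmap p sZ sY g hg ≫ u = h) ∧
        ∀ (g g' : W.affineCover.X i ⟶ Y) (hg : g ≫ sY = sZ) (hg' : g' ≫ sY = sZ),
          jmap p sZ sY g hg ≫ u = h → jmap p sZ sY g' hg' ≫ u = h → g = g' := fun W i => H _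
  have uniq : ∀ (Z : Scheme.{0}) (sZ : Z ⟶ S) (g g' : Z ⟶ Y) (hg : g ≫ sY = sZ)
      (hg' : g' ≫ sY = sZ), jmap p sZ sY g hg ≫ u = jmap p sZ sY g' hg' ≫ u → g = g' := by
    intro Z sZ g g' hg hg' e
    apply Z.affineCover.hom_ext
    intro i
    refine (H' Z i (Z.affineCover.f i ≫ sZ) (jmap p (Z.affineCover.f i ≫ sZ) sZ (Z.affineCover.f i) rfl ≫
      jmap p sZ sY g hg ≫ u) ?_).2 (Z.affineCover.f i ≫ g) (Z.affineCover.f i ≫ g')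
      (by rw [Category.assoc, hg]) (by rw [Category.assoc, hg']) ?_ ?_
    · rw [Category.assoc, Category.assoc, w, jmap_fst_assoc, jmap_fst_assoc, hg]
    · rw [← jmap_comp p _ sZ _ _ rfl _ hg, Category.assoc]
    · rw [e, ← jmap_comp p _ sZ _ _ rfl _ hg', Category.assoc]
  refine ⟨w, ?_, uniq⟩
  intro Z sZ h hh
  refine jet_ex_of_cover p sY u uniq sZ h Z.affineCover fun i => (H' Z i _ _ ?_).1
  rw [Category.assoc, hh, jmap_fst_assoc]

lemma IsJet.of_iso {X X' Y : Scheme.{0}} {sX : X ⟶ S} {sY : Y ⟶ S} {u : pullback sY p ⟶ X}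
    (hu : IsJet p sX sY u) (sX' : X' ⟶ S) (e : X ≅ X') (he : e.hom ≫ sX' = sX) :
    IsJet p sX' sY (u ≫ e.hom) := by
  refine ⟨?_, ?_, ?_⟩
  · rw [Category.assoc, he, hu.w]
  · intro Z sZ h hh
    obtain ⟨g, hg, e'⟩ := hu.ex Z sZ (h ≫ e.inv) (by simp [← he, hh])
    exact ⟨g, hg, by rw [← Category.assoc, e']; simp⟩
  · intro Z sZ g g' hg hg' h
    apply hu.uniq Z sZ g g' hg hg'
    rw [← cancel_mono e.hom]
    simpa using h

variable (z : S ⟶ J) (hz : z ≫ p = 𝟙 S)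

/-- The zero section. -/
noncomputable def jzero {Z : Scheme.{0}} (sZ : Z ⟶ S) : Z ⟶ pullback sZ p :=
  pullback.lift (𝟙 Z) (sZ ≫ z) (by simp [hz])

lemma jzero_fst {Z : Scheme.{0}} (sZ : Z ⟶ S) :
    jzero p z hz sZ ≫ pullback.fst sZ p = 𝟙 Z := pullback.lift_fst _ _ _

lemma jzero_fst_assoc {Z W : Scheme.{0}} (sZ : Z ⟶ S) (q : Z ⟶ W) :
    jzero p z hz sZ ≫ pullback.fst sZ p ≫ q = q := by
  rw [← Category.assoc, jzero_fst, Category.id_comp]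

lemma jzero_snd {Z : Scheme.{0}} (sZ : Z ⟶ S) :
    jzero p z hz sZ ≫ pullback.snd sZ p = sZ ≫ z := pullback.lift_snd _ _ _

lemma jzero_jmap {Z Y : Scheme.{0}} (sZ : Z ⟶ S) (sY : Y ⟶ S) (g : Z ⟶ Y) (hg : g ≫ sY = sZ) :
    jzero p z hz sZ ≫ jmap p sZ sY g hg = g ≫ jzero p z hz sY := by
  apply pullback.hom_ext
  · rw [Category.assoc, jmap_fst, jzero_fst_assoc, Category.assoc, jzero_fst, Category.comp_id]
  · rw [Category.assoc, jmap_snd, jzero_snd, Category.assoc, jzero_snd, ← hg, Category.assoc]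

lemma jzero_surjective [Surjective z] {Z : Scheme.{0}} (sZ : Z ⟶ S) :
    Surjective (jzero p z hz sZ) := by
  have h1 : IsPullback sZ (jzero p z hz sZ) z (pullback.snd sZ p) := by
    apply IsPullback.of_bot (v₂₁ := pullback.fst sZ p) (v₂₂ := p) (h₃₁ := sZ) _
      (jzero_snd p z hz sZ).symm (IsPullback.of_hasPullback sZ p).flip
    rw [jzero_fst, hz]
    exact IsPullback.of_vert_isIso ⟨by simp⟩
  exact MorphismProperty.of_isPullback (P := @Surjective) h1 ‹_›

/-- A jet whose center lies in an open subscheme factors through it. -/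
lemma jet_lift_open [Surjective z] {Z X U : Scheme.{0}} (sZ : Z ⟶ S) (h : pullback sZ p ⟶ X)
    (i : U ⟶ X) [IsOpenImmersion i] (a : Z ⟶ U) (ha : jzero p z hz sZ ≫ h = a ≫ i) :
    ∃ h' : pullback sZ p ⟶ U, h' ≫ i = h := by
  have := jzero_surjective p z hz sZ
  refine ⟨IsOpenImmersion.lift i h ?_, IsOpenImmersion.lift_fac _ _ _⟩
  rintro _ ⟨y, rfl⟩
  obtain ⟨x, rfl⟩ := (jzero p z hz sZ).surjective y
  refine ⟨a x, ?_⟩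
  rw [← Scheme.Hom.comp_apply, ← ha, Scheme.Hom.comp_apply]

end JetGeometry
section JetAffine
open TensorProduct

lemma jmap_spec {k R : Type} [Field k] [CommRing R] [Algebra k R] {B C : Type} [CommRing B]
    [Algebra k B] [CommRing C] [Algebra k C] (f : B →ₐ[k] C)
    (hf : Spec.map (CommRingCat.ofHom f.toRingHom) ≫
      Spec.map (CommRingCat.ofHom (algebraMap k B)) = Spec.map (CommRingCat.ofHom (algebraMap k C))) :
    jmap (Spec.map (CommRingCat.ofHom (algebraMap k R)))
      (Spec.map (CommRingCat.ofHom (algebraMap k C)))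
      (Spec.map (CommRingCat.ofHom (algebraMap k B))) (Spec.map (CommRingCat.ofHom f.toRingHom)) hf =
    (pullbackSpecIso k C R).hom ≫
      Spec.map (CommRingCat.ofHom (Algebra.TensorProduct.map f (AlgHom.id k R)).toRingHom) ≫
      (pullbackSpecIso k B R).inv := by
  rw [← Iso.inv_comp_eq]
  apply pullback.hom_ext
  · rw [Category.assoc, jmap_fst, ← Category.assoc, pullbackSpecIso_inv_fst, Category.assoc,
      pullbackSpecIso_inv_fst, ← Spec.map_comp, ← Spec.map_comp]
    congr 1
  · rw [Category.assoc, jmap_snd, pullbackSpecIso_inv_snd, Category.assoc,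
      pullbackSpecIso_inv_snd, ← Spec.map_comp]
    congr 1
    ext x
    simp

lemma jet_spec {k R ι : Type} [Field k] [CommRing R] [Algebra k R] [Fintype ι]
    (b : Module.Basis ι k R) (A : Type) [CommRing A] [Algebra k A] [Algebra.FiniteType k A] :
    ∃ (Y : Scheme.{0}) (sY : Y ⟶ Spec (CommRingCat.of k))
      (u : pullback sY (Spec.map (CommRingCat.ofHom (algebraMap k R))) ⟶ Spec (CommRingCat.of A)),
      IsAffine Y ∧ LocallyOfFiniteType sY ∧
      IsJet (Spec.map (CommRingCat.ofHom (algebraMap k R)))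
        (Spec.map (CommRingCat.ofHom (algebraMap k A))) sY u := by
  obtain ⟨B, _, _, hB, υ, hυ⟩ := jetAux_algebra b A
  refine ⟨Spec (CommRingCat.of B), Spec.map (CommRingCat.ofHom (algebraMap k B)),
    (pullbackSpecIso k B R).hom ≫ Spec.map (CommRingCat.ofHom υ.toRingHom), inferInstance, ?_, ?_⟩
  · rw [HasRingHomProperty.Spec_iff (P := @LocallyOfFiniteType)]
    exact (RingHom.finiteType_algebraMap).mpr hB
  apply IsJet.of_affine
  · rw [Category.assoc, ← Iso.eq_inv_comp, ← Category.assoc, pullbackSpecIso_inv_fst,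
      ← Spec.map_comp, ← Spec.map_comp]
    congr 1
    ext x
    simp
  intro C sZ h hh
  obtain ⟨φ, hφ⟩ := Spec.map_surjective sZ
  let _ : Algebra k C := φ.hom.toAlgebra
  obtain rfl : sZ = Spec.map (CommRingCat.ofHom (algebraMap k C)) := hφ.symm
  obtain ⟨η, hη⟩ := Spec.map_surjective ((pullbackSpecIso k C R).inv ≫ h)
  have hη' : h = (pullbackSpecIso k C R).hom ≫ Spec.map η := by rw [hη]; simp
  have hk : CommRingCat.ofHom (algebraMap k A) ≫ η =
      CommRingCat.ofHom (algebraMap k (C ⊗[k] R)) := by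
    apply Spec.map_injective
    rw [Spec.map_comp, hη, Category.assoc, hh, ← Category.assoc, pullbackSpecIso_inv_fst,
      ← Spec.map_comp]
    rfl
  let η' : A →ₐ[k] C ⊗[k] R := { η.hom with
    commutes' := fun r => DFunLike.congr_fun (congrArg CommRingCat.Hom.hom hk) r }
  have key : ∀ (f : B →ₐ[k] C) (hf), jmap (Spec.map (CommRingCat.ofHom (algebraMap k R)))
      (Spec.map (CommRingCat.ofHom (algebraMap k C)))
      (Spec.map (CommRingCat.ofHom (algebraMap k B))) (Spec.map (CommRingCat.ofHom f.toRingHom)) hf ≫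
      (pullbackSpecIso k B R).hom ≫ Spec.map (CommRingCat.ofHom υ.toRingHom) = h ↔
      (Algebra.TensorProduct.map f (AlgHom.id k R)).comp υ = η' := by
    intro f hf
    rw [jmap_spec, hη']
    simp only [Category.assoc, Iso.inv_hom_id_assoc]
    rw [Iso.cancel_iso_hom_left, ← Spec.map_comp, Spec.map_injective.eq_iff]
    constructor
    · intro e
      ext x
      exact DFunLike.congr_fun (congrArg CommRingCat.Hom.hom e) x
    · intro e
      ext x
      exact DFunLike.congr_fun e x
  have lift : ∀ g : Spec C ⟶ Spec (CommRingCat.of B),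
      g ≫ Spec.map (CommRingCat.ofHom (algebraMap k B)) =
        Spec.map (CommRingCat.ofHom (algebraMap k C)) →
      ∃ f : B →ₐ[k] C, g = Spec.map (CommRingCat.ofHom f.toRingHom) := by
    intro g hg
    obtain ⟨ψ, rfl⟩ := Spec.map_surjective g
    rw [← Spec.map_comp, Spec.map_injective.eq_iff] at hg
    exact ⟨{ ψ.hom with commutes' := fun r => DFunLike.congr_fun (congrArg CommRingCat.Hom.hom hg) r }, rfl⟩
  obtain ⟨f, hf, hfu⟩ := hυ C η'
  constructor
  · have e : Spec.map (CommRingCat.ofHom f.toRingHom) ≫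
        Spec.map (CommRingCat.ofHom (algebraMap k B)) =
        Spec.map (CommRingCat.ofHom (algebraMap k C)) := by
      rw [← Spec.map_comp]
      congr 1
      ext x
      simp
    exact ⟨_, e, (key f e).mpr hf⟩
  · intro g g' hg hg' e e'
    obtain ⟨f1, rfl⟩ := lift g hg
    obtain ⟨f2, rfl⟩ := lift g' hg'
    rw [hfu f1 ((key f1 hg).mp e), hfu f2 ((key f2 hg').mp e')]

lemma jet_affine {k R ι : Type} [Field k] [CommRing R] [Algebra k R] [Fintype ι]
    (b : Module.Basis ι k R) (X : Scheme.{0}) [IsAffine X] (sX : X ⟶ Spec (CommRingCat.of k))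
    [LocallyOfFiniteType sX] :
    ∃ (Y : Scheme.{0}) (sY : Y ⟶ Spec (CommRingCat.of k))
      (u : pullback sY (Spec.map (CommRingCat.ofHom (algebraMap k R))) ⟶ X),
      IsAffine Y ∧ LocallyOfFiniteType sY ∧
      IsJet (Spec.map (CommRingCat.ofHom (algebraMap k R))) sX sY u := by
  obtain ⟨φ, hφ⟩ := Spec.map_surjective (X.isoSpec.inv ≫ sX)
  let _ : Algebra k Γ(X, ⊤) := φ.hom.toAlgebra
  change Spec.map (CommRingCat.ofHom (algebraMap k Γ(X, ⊤))) = _ at hφ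
  have : LocallyOfFiniteType (Spec.map (CommRingCat.ofHom (algebraMap k Γ(X, ⊤)))) := by
    rw [hφ]; infer_instance
  rw [HasRingHomProperty.Spec_iff (P := @LocallyOfFiniteType)] at this
  have hA : Algebra.FiniteType k Γ(X, ⊤) := (RingHom.finiteType_algebraMap).mp this
  obtain ⟨Y, sY, u, h1, h2, h3⟩ := jet_spec b Γ(X, ⊤)
  exact ⟨Y, sY, _, h1, h2, h3.of_iso _ sX X.isoSpec.symm hφ.symm⟩

end JetAffine
section JetZero

lemma jetZero_surj (k : Type) [Field k] (m : ℕ) : Surjective (jetZero k m) := by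
  have hs : Function.Surjective (jetEvalAlgHom k m).toRingHom := fun c =>
    ⟨algebraMap k _ c, (jetEvalAlgHom k m).commutes c⟩
  have hr := range_comap_of_surjective _ (jetEvalAlgHom k m).toRingHom hs
  have hker : RingHom.ker (jetEvalAlgHom k m).toRingHom ≤ nilradical (JetRing k m) := by
    intro x hx
    obtain ⟨q, rfl⟩ := Ideal.Quotient.mk_surjective x
    have h0 : Polynomial.aeval (0 : k) q = 0 := hx
    have h1 : (Polynomial.X : Polynomial k) ∣ q := by
      rw [Polynomial.X_dvd_iff, Polynomial.coeff_zero_eq_aeval_zero]; exact h0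
    rw [mem_nilradical]
    refine ⟨m + 1, ?_⟩
    rw [← map_pow, Ideal.Quotient.eq_zero_iff_mem, Ideal.mem_span_singleton]
    exact pow_dvd_pow_of_dvd h1 _
  constructor
  intro x
  have hx : (x : PrimeSpectrum (JetRing k m)) ∈
      Set.range (PrimeSpectrum.comap (jetEvalAlgHom k m).toRingHom) := by
    rw [hr]
    intro y hy
    let x' : PrimeSpectrum (JetRing k m) := x
    exact nilradical_le_prime x'.asIdeal (hker hy)
  exact hx

lemma jetRing_basis (k : Type) [Field k] (m : ℕ) :
    ∃ n : ℕ, Nonempty (Module.Basis (Fin n) k (JetRing k m)) := by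
  have : Module.Finite k (JetRing k m) := (Polynomial.monic_X_pow (R := k) (m+1)).finite_quotient
  exact ⟨_, ⟨Module.finBasis k _⟩⟩
end JetZero
section JetGluing
variable {S J : Scheme.{0}} (p : J ⟶ S) (z : S ⟶ J) (hz : z ≫ p = 𝟙 S)

lemma jet_square [Surjective z] {X X' Y Y' : Scheme.{0}} {sX : X ⟶ S} {sY : Y ⟶ S}
    {u : pullback sY p ⟶ X} (hu : IsJet p sX sY u) {sX' : X' ⟶ S} {sY' : Y' ⟶ S}
    {u' : pullback sY' p ⟶ X'} (hu' : IsJet p sX' sY' u') (f : X ⟶ X') [IsOpenImmersion f]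
    (hf : f ≫ sX' = sX) (g : Y ⟶ Y') (hg : g ≫ sY' = sY)
    (hgu : jmap p sY sY' g hg ≫ u' = u ≫ f) :
    IsPullback g (jzero p z hz sY ≫ u) (jzero p z hz sY' ≫ u') f := by
  have comm : g ≫ jzero p z hz sY' ≫ u' = (jzero p z hz sY ≫ u) ≫ f := by
    rw [Category.assoc, ← hgu]
    refine (Category.assoc _ _ _).symm.trans ?_
    rw [← jzero_jmap p z hz sY sY' g hg, Category.assoc]
  have lift : ∀ (T : Scheme.{0}) (a : T ⟶ Y') (b : T ⟶ X),
      a ≫ jzero p z hz sY' ≫ u' = b ≫ f →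
      ∃ t : T ⟶ Y, t ≫ g = a ∧ t ≫ jzero p z hz sY ≫ u = b ∧ ∀ m : T ⟶ Y, m ≫ g = a → m = t := by
    intro T a b hab
    have h0 : jzero p z hz (a ≫ sY') ≫ jmap p (a ≫ sY') sY' a rfl ≫ u' = b ≫ f := by
      rw [← hab]
      refine (Category.assoc _ _ _).symm.trans ?_
      rw [jzero_jmap, Category.assoc]
    obtain ⟨h', hh'⟩ := jet_lift_open p z hz (a ≫ sY') (jmap p (a ≫ sY') sY' a rfl ≫ u') f b h0
    obtain ⟨t, ht, htu⟩ := hu.ex T (a ≫ sY') h' (by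
      rw [← hf]
      refine (Category.assoc _ _ _).symm.trans ?_
      rw [hh', Category.assoc, hu'.w, jmap_fst_assoc])
    have ht1 : t ≫ g = a := by
      apply hu'.uniq T (a ≫ sY') _ _ (by rw [Category.assoc, hg, ht]) rfl
      rw [← hh', ← htu, ← jmap_comp p _ sY _ _ ht _ hg, Category.assoc, hgu, Category.assoc]
    refine ⟨t, ht1, ?_, ?_⟩
    · rw [← cancel_mono f, ← hab, ← ht1, Category.assoc, Category.assoc, Category.assoc, comm,
        Category.assoc]
    · intro m hm
      have hm' : m ≫ sY = a ≫ sY' := by rw [← hg, ← Category.assoc, hm]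
      apply hu.uniq T (a ≫ sY') _ _ hm' ht
      rw [htu, ← cancel_mono f, hh', Category.assoc, ← hgu]
      refine (Category.assoc _ _ _).symm.trans ?_
      rw [jmap_comp]
      simp only [hm]
  choose t ht1 ht2 ht3 using lift
  exact ⟨⟨comm⟩, ⟨PullbackCone.IsLimit.mk _ (fun s => t _ s.fst s.snd s.condition)
    (fun s => ht1 _ _ _ _) (fun s => ht2 _ _ _ _) (fun s m h1 _ => ht3 _ _ _ _ m h1)⟩⟩

variable {X : Scheme.{0}} (sX : X ⟶ S) (𝒰 : X.OpenCover) [Category 𝒰.I₀] [𝒰.LocallyDirected]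
  (Y : 𝒰.I₀ → Scheme.{0}) (sY : ∀ i, Y i ⟶ S) (u : ∀ i, pullback (sY i) p ⟶ 𝒰.X i)

lemma jet_trans_exists (hu : ∀ i, IsJet p (𝒰.f i ≫ sX) (sY i) (u i)) {i j : 𝒰.I₀} (f : i ⟶ j) : ∃ g : Y i ⟶ Y j, ∃ hg : g ≫ sY j = sY i,
    jmap p (sY i) (sY j) g hg ≫ u j = u i ≫ Scheme.Cover.trans 𝒰 f :=
  (hu j).ex _ _ _ (by rw [Category.assoc, jtrans, (hu i).w])

variable (hu : ∀ i, IsJet p (𝒰.f i ≫ sX) (sY i) (u i))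

/-- The functor `i ↦ Y i` of local jet schemes. -/
noncomputable def jetFunctor : 𝒰.I₀ ⥤ Scheme.{0} where
  obj := Y
  map f := (jet_trans_exists p sX 𝒰 Y sY u hu f).choose
  map_id i := by
    apply (hu i).uniq _ (sY i) _ _ (jet_trans_exists p sX 𝒰 Y sY u hu (𝟙 i)).choose_spec.choose
      (Category.id_comp _)
    rw [(jet_trans_exists p sX 𝒰 Y sY u hu (𝟙 i)).choose_spec.choose_spec]
    rw [Scheme.Cover.trans_id, Category.comp_id]
    have : jmap p (sY i) (sY i) (𝟙 _) (Category.id_comp _) = 𝟙 _ := by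
      apply pullback.hom_ext <;> simp
    rw [this, Category.id_comp]
  map_comp {i j l} f g := by
    have h1 := (jet_trans_exists p sX 𝒰 Y sY u hu f).choose_spec.choose_spec
    have h2 := (jet_trans_exists p sX 𝒰 Y sY u hu g).choose_spec.choose_spec
    apply (hu l).uniq _ (sY i) _ _ (jet_trans_exists p sX 𝒰 Y sY u hu (f ≫ g)).choose_spec.choose
      (by rw [Category.assoc, (jet_trans_exists p sX 𝒰 Y sY u hu g).choose_spec.choose,
        (jet_trans_exists p sX 𝒰 Y sY u hu f).choose_spec.choose])
    rw [(jet_trans_exists p sX 𝒰 Y sY u hu (f ≫ g)).choose_spec.choose_spec,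
      ← jmap_comp p _ (sY j) _ _ (jet_trans_exists p sX 𝒰 Y sY u hu f).choose_spec.choose _
        (jet_trans_exists p sX 𝒰 Y sY u hu g).choose_spec.choose, Category.assoc, h2]
    refine Eq.trans ?_ (Category.assoc _ _ _)
    rw [h1, Category.assoc, Scheme.Cover.trans_comp]

lemma jetFunctor_w {i j : 𝒰.I₀} (f : i ⟶ j) :
    (jetFunctor p sX 𝒰 Y sY u hu).map f ≫ sY j = sY i :=
  (jet_trans_exists p sX 𝒰 Y sY u hu f).choose_spec.choose

lemma jetFunctor_u {i j : 𝒰.I₀} (f : i ⟶ j) :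
    jmap p (sY i) (sY j) ((jetFunctor p sX 𝒰 Y sY u hu).map f)
      (jetFunctor_w p sX 𝒰 Y sY u hu f) ≫ u j = u i ≫ Scheme.Cover.trans 𝒰 f :=
  (jet_trans_exists p sX 𝒰 Y sY u hu f).choose_spec.choose_spec

lemma jetFunctor_square [Surjective z] {i j : 𝒰.I₀} (f : i ⟶ j) :
    IsPullback ((jetFunctor p sX 𝒰 Y sY u hu).map f) (jzero p z hz (sY i) ≫ u i)
      (jzero p z hz (sY j) ≫ u j) (Scheme.Cover.trans 𝒰 f) :=
  jet_square p z hz (hu i) (hu j) _ (jtrans sX 𝒰 f) _ (jetFunctor_w p sX 𝒰 Y sY u hu f)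
    (jetFunctor_u p sX 𝒰 Y sY u hu f)

/-- The relative gluing datum of local jet schemes. -/
noncomputable def jetGluing [Surjective z] : Scheme.Cover.RelativeGluingData 𝒰 where
  functor := jetFunctor p sX 𝒰 Y sY u hu
  natTrans :=
    { app := fun i => jzero p z hz (sY i) ≫ u i
      naturality := fun _ _ f => (jetFunctor_square p z hz sX 𝒰 Y sY u hu f).w }
  equifibered := fun _ _ f => jetFunctor_square p z hz sX 𝒰 Y sY u hu f


lemma jmap_glue_of_eq {Z X : Scheme.{0}} (sZ : Z ⟶ S) (𝒱 : Z.OpenCover) [Category 𝒱.I₀]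
    [𝒱.LocallyDirected] (s : ∀ i, 𝒱.X i ⟶ S) (hs : ∀ i, 𝒱.f i ≫ sZ = s i)
    (hs' : ∀ {i j} (f : i ⟶ j), Scheme.Cover.trans 𝒱 f ≫ s j = s i)
    (a : ∀ i, pullback (s i) p ⟶ X)
    (h : ∀ {i j} (f : i ⟶ j), jmap p (s i) (s j) (Scheme.Cover.trans 𝒱 f) (hs' f) ≫ a j = a i) :
    ∃ b : pullback sZ p ⟶ X, ∀ i, jmap p (s i) sZ (𝒱.f i) (hs i) ≫ b = a i := by
  obtain rfl : (fun i => 𝒱.f i ≫ sZ) = s := funext hs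
  exact jmap_glue p sZ 𝒱 a h

lemma jet_glued [Surjective z] [Small.{0} 𝒰.I₀] [Quiver.IsThin 𝒰.I₀]
    (hu : ∀ i, IsJet p (𝒰.f i ≫ sX) (sY i) (u i)) :
    ∃ (W : Scheme.{0}) (π : W ⟶ X) (ι : ∀ i, Y i ⟶ W) (hι : ∀ i, ι i ≫ π ≫ sX = sY i)
      (b : pullback (π ≫ sX) p ⟶ X),
      (∀ i, IsPullback (jzero p z hz (sY i) ≫ u i) (ι i) (𝒰.f i) π) ∧
      ∀ i, jmap p (sY i) (π ≫ sX) (ι i) (hι i) ≫ b = u i ≫ 𝒰.f i := by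
  let d := jetGluing p z hz sX 𝒰 Y sY u hu
  have hι : ∀ i : 𝒰.I₀, colimit.ι d.functor i ≫ d.toBase ≫ sX = sY i := by
    intro i
    rw [← Category.assoc, d.ι_toBase]
    change ((jzero p z hz (sY i) ≫ u i) ≫ 𝒰.f i) ≫ sX = _
    rw [Category.assoc, Category.assoc, (hu i).w, jzero_fst_assoc]
  obtain ⟨b, hb⟩ := jmap_glue_of_eq p (d.toBase ≫ sX) d.cover sY hι
    (fun f => jetFunctor_w p sX 𝒰 Y sY u hu f) (fun (i : 𝒰.I₀) => u i ≫ 𝒰.f i) (by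
      intro (i : 𝒰.I₀) (j : 𝒰.I₀) (f : i ⟶ j)
      have e1 := jetFunctor_u p sX 𝒰 Y sY u hu f
      have e2 : jmap p (sY i) (sY j) ((jetFunctor p sX 𝒰 Y sY u hu).map f)
        (jetFunctor_w p sX 𝒰 Y sY u hu f) ≫ u j ≫ 𝒰.f j = u i ≫ 𝒰.f i := by
        refine (Category.assoc _ _ _).symm.trans ?_
        rw [e1, Category.assoc, Scheme.Cover.trans_map]
      exact e2)
  exact ⟨d.glued, d.toBase, fun i => colimit.ι d.functor i, hι, b,
    fun i => d.isPullback_natTrans_ι_toBase i, hb⟩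

lemma jet_glued_isJet [Surjective z]
    (hu : ∀ i, IsJet p (𝒰.f i ≫ sX) (sY i) (u i))
    (W : Scheme.{0}) (π : W ⟶ X) (ι : ∀ i, Y i ⟶ W) (hι : ∀ i, ι i ≫ π ≫ sX = sY i)
    (b : pullback (π ≫ sX) p ⟶ X)
    (hpb : ∀ i, IsPullback (jzero p z hz (sY i) ≫ u i) (ι i) (𝒰.f i) π)
    (hb : ∀ i, jmap p (sY i) (π ≫ sX) (ι i) (hι i) ≫ b = u i ≫ 𝒰.f i) :
    IsJet p sX (π ≫ sX) b := by
  -- lifting a map to `W` with image in `𝒰.X i`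
  have lft : ∀ (i : 𝒰.I₀) {T : Scheme.{0}} (g : T ⟶ W) (a : T ⟶ 𝒰.X i), a ≫ 𝒰.f i = g ≫ π →
      ∃ t : T ⟶ Y i, t ≫ ι i = g := fun i T g a h => ⟨(hpb i).lift a g h, (hpb i).lift_snd _ _ _⟩
  -- the factorisation of the pulled back cover
  have fac : ∀ i, ∃ t : pullback π (𝒰.f i) ⟶ Y i, t ≫ ι i = pullback.fst π (𝒰.f i) :=
    fun i => lft i _ _ pullback.condition.symm
  have zb : jzero p z hz (π ≫ sX) ≫ b = π := by
    apply (𝒰.pullback₁ π).hom_ext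
    intro (i : 𝒰.I₀)
    change pullback.fst π (𝒰.f i) ≫ _ = pullback.fst π (𝒰.f i) ≫ _
    obtain ⟨t, ht⟩ := fac i
    rw [← ht, Category.assoc, Category.assoc]
    congr 1
    refine (Category.assoc _ _ _).symm.trans ?_
    rw [← jzero_jmap p z hz (sY i) (π ≫ sX) (ι i) (hι i), Category.assoc, hb, ← (hpb i).w,
      Category.assoc]
  have w : b ≫ sX = pullback.fst (π ≫ sX) p ≫ π ≫ sX := by
    apply jmap_hom_ext p (π ≫ sX) (𝒰.pullback₁ π)
    intro (i : 𝒰.I₀)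
    change jmap p (pullback.fst π (𝒰.f i) ≫ π ≫ sX) (π ≫ sX) (pullback.fst π (𝒰.f i)) rfl ≫ _ =
      jmap p (pullback.fst π (𝒰.f i) ≫ π ≫ sX) (π ≫ sX) (pullback.fst π (𝒰.f i)) rfl ≫ _
    obtain ⟨t, ht⟩ := fac i
    have ht' : t ≫ sY i = pullback.fst π (𝒰.f i) ≫ π ≫ sX := by rw [← hι i, ← ht, Category.assoc]
    have e : jmap p (pullback.fst π (𝒰.f i) ≫ π ≫ sX) (π ≫ sX) (pullback.fst π (𝒰.f i)) rfl =
        jmap p _ (sY i) t ht' ≫ jmap p (sY i) (π ≫ sX) (ι i) (hι i) := by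
      rw [jmap_comp]
      simp only [ht]
    rw [e, Category.assoc, Category.assoc]
    congr 1
    rw [jmap_fst_assoc, hι, ← (hu i).w]
    refine (Category.assoc _ _ _).symm.trans ?_
    rw [hb, Category.assoc]
  -- the center of the jet associated with `g`
  have ctr : ∀ {T : Scheme.{0}} (sT : T ⟶ S) (g : T ⟶ W) (hg : g ≫ π ≫ sX = sT),
      jzero p z hz sT ≫ jmap p sT (π ≫ sX) g hg ≫ b = g ≫ π := by
    intro T sT g hg
    refine (Category.assoc _ _ _).symm.trans ?_
    rw [jzero_jmap, Category.assoc, zb]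
  have jc : ∀ (i : 𝒰.I₀) {T : Scheme.{0}} (sT : T ⟶ S) (t : T ⟶ Y i) (g : T ⟶ W)
      (ht : t ≫ sY i = sT) (e : t ≫ ι i = g) (hg : g ≫ π ≫ sX = sT),
      jmap p sT (π ≫ sX) g hg ≫ b = (jmap p sT (sY i) t ht ≫ u i) ≫ 𝒰.f i := by
    intro i T sT t g ht e hg
    subst e
    rw [← jmap_comp p _ (sY i) _ _ ht _ (hι i), Category.assoc, hb, Category.assoc]
  have uniq : ∀ (Z : Scheme.{0}) (sZ : Z ⟶ S) (g g' : Z ⟶ W) (hg : g ≫ π ≫ sX = sZ)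
      (hg' : g' ≫ π ≫ sX = sZ),
      jmap p sZ (π ≫ sX) g hg ≫ b = jmap p sZ (π ≫ sX) g' hg' ≫ b → g = g' := by
    intro Z sZ g g' hg hg' e
    have hc : g ≫ π = g' ≫ π := by rw [← ctr sZ g hg, ← ctr sZ g' hg', e]
    apply (𝒰.pullback₁ (g ≫ π)).hom_ext
    intro (i : 𝒰.I₀)
    change pullback.fst (g ≫ π) (𝒰.f i) ≫ _ = pullback.fst (g ≫ π) (𝒰.f i) ≫ _
    generalize hq : pullback.fst (g ≫ π) (𝒰.f i) = q
    have hq' : pullback.snd (g ≫ π) (𝒰.f i) ≫ 𝒰.f i = q ≫ g ≫ π := by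
      rw [← hq, pullback.condition]
    obtain ⟨t, ht⟩ := lft i (q ≫ g) (pullback.snd (g ≫ π) (𝒰.f i))
      (by rw [hq', Category.assoc])
    obtain ⟨t', ht'⟩ := lft i (q ≫ g') (pullback.snd (g ≫ π) (𝒰.f i))
      (by rw [hq', Category.assoc]; exact congrArg (q ≫ ·) hc)
    rw [← ht, ← ht']
    congr 1
    have h1 : t ≫ sY i = q ≫ sZ := by
      rw [← hι i, ← Category.assoc, ht, Category.assoc, hg]
    have h1' : t' ≫ sY i = q ≫ sZ := by
      rw [← hι i, ← Category.assoc, ht', Category.assoc, hg']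
    apply (hu i).uniq _ (q ≫ sZ) t t' h1 h1'
    rw [← cancel_mono (𝒰.f i),
      ← jc i (q ≫ sZ) t (q ≫ g) h1 ht (by rw [Category.assoc, hg]),
      ← jc i (q ≫ sZ) t' (q ≫ g') h1' ht' (by rw [Category.assoc, hg']),
      ← jmap_comp p _ sZ _ _ rfl _ hg, ← jmap_comp p _ sZ _ _ rfl _ hg', Category.assoc,
      Category.assoc, e]
  refine ⟨w, ?_, uniq⟩
  intro Z sZ h hh
  refine jet_ex_of_cover p (π ≫ sX) b uniq sZ h (𝒰.pullback₁ (jzero p z hz sZ ≫ h)) ?_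
  intro (i : 𝒰.I₀)
  change ∃ g, ∃ hg : g ≫ π ≫ sX = pullback.fst (jzero p z hz sZ ≫ h) (𝒰.f i) ≫ sZ,
    jmap p (pullback.fst (jzero p z hz sZ ≫ h) (𝒰.f i) ≫ sZ) (π ≫ sX) g hg ≫ b =
      jmap p (pullback.fst (jzero p z hz sZ ≫ h) (𝒰.f i) ≫ sZ) sZ
        (pullback.fst (jzero p z hz sZ ≫ h) (𝒰.f i)) rfl ≫ h
  have hcond := pullback.condition (f := jzero p z hz sZ ≫ h) (g := 𝒰.f i)
  generalize pullback.fst (jzero p z hz sZ ≫ h) (𝒰.f i) = q at hcond ⊢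
  obtain ⟨h', hh'⟩ := jet_lift_open p z hz (q ≫ sZ) (jmap p (q ≫ sZ) sZ q rfl ≫ h) (𝒰.f i)
    (pullback.snd (jzero p z hz sZ ≫ h) (𝒰.f i)) (by
      rw [← hcond]
      refine (Category.assoc _ _ _).symm.trans ?_
      rw [jzero_jmap, Category.assoc])
  obtain ⟨t, ht, htu⟩ := (hu i).ex _ (q ≫ sZ) h' (by
    refine (Category.assoc _ _ _).symm.trans ?_
    rw [hh', Category.assoc, hh, jmap_fst_assoc])
  have hg : (t ≫ ι i) ≫ π ≫ sX = q ≫ sZ := by rw [Category.assoc, hι, ht]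
  refine ⟨t ≫ ι i, hg, ?_⟩
  rw [jc i (q ≫ sZ) t (t ≫ ι i) ht rfl hg, htu, hh']

end JetGluing
section JetFinal

lemma jet_finite {X S : Scheme.{0}} (sX : X ⟶ S) (𝒰 : Scheme.OpenCover.{0} X)
    (Y : 𝒰.I₀ → Scheme.{0}) [∀ i, IsAffine (Y i)] [∀ i, IsAffine (𝒰.X i)]
    (W : Scheme.{0}) (π : W ⟶ X) (ι : ∀ i, Y i ⟶ W) (a : ∀ i, Y i ⟶ 𝒰.X i)
    (hl : ∀ i, LocallyOfFiniteType (ι i ≫ π ≫ sX))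
    (hpb : ∀ i, IsPullback (a i) (ι i) (𝒰.f i) π) [QuasiCompact sX] :
    LocallyOfFiniteType (π ≫ sX) ∧ QuasiCompact (π ≫ sX) := by
  have i1 : IsZariskiLocalAtSource (@LocallyOfFiniteType.{0}) :=
    HasRingHomProperty.instIsZariskiLocalAtSource
  have i2 : IsZariskiLocalAtTarget (@QuasiCompact.{0}) :=
    @HasAffineProperty.instIsZariskiLocalAtTarget _ (fun X _ _ _ ↦ CompactSpace X)
      instHasAffinePropertyQuasiCompactCompactSpaceCarrierCarrierCommRingCat
  constructor
  · rw [IsZariskiLocalAtSource.iff_of_openCover (P := @LocallyOfFiniteType.{0}) (𝒰.pullback₁ π)]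
    intro (i : 𝒰.I₀)
    change LocallyOfFiniteType (pullback.fst π (𝒰.f i) ≫ π ≫ sX)
    have e : pullback.fst π (𝒰.f i) = (hpb i).flip.isoPullback.inv ≫ ι i := by simp
    have := hl i
    rw [e, Category.assoc]
    infer_instance
  · have : QuasiCompact π := by
      rw [IsZariskiLocalAtTarget.iff_of_openCover (P := @QuasiCompact.{0}) 𝒰]
      intro (i : 𝒰.I₀)
      change QuasiCompact (pullback.snd π (𝒰.f i))
      have e : pullback.snd π (𝒰.f i) = (hpb i).flip.isoPullback.inv ≫ a i := by simp
      rw [e]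
      infer_instance
    infer_instance

end JetFinal
open AlgebraicGeometry CategoryTheory Limits in
/-- For a field `k`, a scheme `X` of finite type over `k` and `m ∈ ℕ`,
the `m`-jet functor `Z ↦ Hom_k(Z ×_{Spec k} Spec(k[t]/(t^{m+1})), X)` is representable
by a scheme `X_m` of finite type over `k`: there are `X_m`, a structure morphism
`sXm : X_m → Spec k` of finite type, and a universal `k`-morphism
`u : X_m ×_{Spec k} Spec(k[t]/(t^{m+1})) → X` such that for every `k`-scheme `Z`,
`g ↦ u ∘ (g × id)` is a bijection from `Hom_k(Z, X_m)` to
`Hom_k(Z ×_{Spec k} Spec(k[t]/(t^{m+1})), X)` (expressed as: every `k`-morphism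
`h : Z ×_{Spec k} Spec(k[t]/(t^{m+1})) → X` has a unique preimage). -/
theorem jet_scheme_representable (k : Type) [Field k] (m : ℕ)
    (X : Scheme) (sX : X ⟶ Speck k) [LocallyOfFiniteType sX] [QuasiCompact sX] :
    ∃ (Xm : Scheme) (sXm : Xm ⟶ Speck k),
      LocallyOfFiniteType sXm ∧ QuasiCompact sXm ∧
      ∃ u : pullback sXm (jetStruct k m) ⟶ X,
        u ≫ sX = pullback.fst sXm (jetStruct k m) ≫ sXm ∧
        ∀ (Z : Scheme) (sZ : Z ⟶ Speck k) (h : pullback sZ (jetStruct k m) ⟶ X),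
          h ≫ sX = pullback.fst sZ (jetStruct k m) ≫ sZ →
          ∃! g : { g : Z ⟶ Xm // g ≫ sXm = sZ },
            pullback.map sZ (jetStruct k m) sXm (jetStruct k m) g.1
              (𝟙 (JetSpec k m)) (𝟙 (Speck k))
              (by rw [Category.comp_id, g.2]) (by simp) ≫ u = h := by
  obtain ⟨n, ⟨bs⟩⟩ := jetRing_basis k m
  have hsurj := jetZero_surj k m
  have hz := jetZero_jetStruct k m
  have haff : ∀ i : X.directedAffineCover.I₀, IsAffine (X.directedAffineCover.X i) :=
    fun i => i.2
  have H := fun i : X.directedAffineCover.I₀ =>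
    jet_affine bs (X.directedAffineCover.X i) (X.directedAffineCover.f i ≫ sX)
  choose Y sY u hY hl hu using H
  obtain ⟨W, π, ι, hι, b, hpb, hb⟩ := jet_glued (jetStruct k m) (jetZero k m) hz sX
    X.directedAffineCover Y sY u hu
  have hJ : IsJet (jetStruct k m) sX (π ≫ sX) b :=
    jet_glued_isJet (jetStruct k m) (jetZero k m) hz sX X.directedAffineCover Y sY u hu W π ι hι b
      hpb hb
  obtain ⟨h1, h2⟩ := jet_finite sX X.directedAffineCover Y W π ι _
    (fun i => by rw [hι]; exact hl i) hpb
  refine ⟨W, π ≫ sX, h1, h2, b, hJ.w, ?_⟩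
  intro Z sZ h hh
  have hm : ∀ (g : Z ⟶ W) (hg : g ≫ π ≫ sX = sZ) (e1) (e2),
      pullback.map sZ (jetStruct k m) (π ≫ sX) (jetStruct k m) g (𝟙 (JetSpec k m)) (𝟙 (Speck k))
        e1 e2 = jmap (jetStruct k m) sZ (π ≫ sX) g hg := by
    intro g hg e1 e2
    apply pullback.hom_ext
    · rw [jmap_fst]
      exact pullback.lift_fst _ _ _
    · rw [jmap_snd]
      exact (pullback.lift_snd _ _ _).trans (Category.comp_id _)
  obtain ⟨g, hg, hgb⟩ := hJ.ex Z sZ h hh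
  refine ⟨⟨g, hg⟩, ?_, ?_⟩
  · change pullback.map _ _ _ _ _ _ _ _ _ ≫ b = h
    rw [hm g hg]
    exact hgb
  · rintro ⟨g', hg'⟩ e
    change pullback.map _ _ _ _ _ _ _ _ _ ≫ b = h at e
    rw [hm g' hg'] at e
    exact Subtype.ext (hJ.uniq Z sZ g' g hg' hg (e.trans hgb.symm))
end

section
/- Let k be a field, m a natural number, and R a finitely generated commutative k-algebra. Then there exist a finitely generated commutative k-algebra R_m and bijections Hom_{k-alg}(R_m, A) ≅ Hom_{k-alg}(R, A[t]/(t^{m+1})), natural in the commutative k-algebra A; that is, the covariant functor A ↦ Hom_{k-alg}(R, A[t]/(t^{m+1})) from commutative k-algebras to sets is corepresentable by a finitely generated k-algebra. -/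
/-! Jet algebras: `Jet A m = A[t]/(t^{m+1})`. -/

/-- The `m`-jet algebra `A[t]/(t^{m+1})` of a commutative ring `A`. -/
abbrev Jet (A : Type) [CommRing A] (m : ℕ) : Type :=
  Polynomial A ⧸ Ideal.span {(Polynomial.X : Polynomial A) ^ (m + 1)}

/-- The functorial map `A[t]/(t^{m+1}) → B[t]/(t^{m+1})` induced by a `k`-algebra
homomorphism `f : A → B` (apply `f` to coefficients). -/
noncomputable def jetMap {k A B : Type} [CommRing k] [CommRing A] [CommRing B]
    [Algebra k A] [Algebra k B] (m : ℕ) (f : A →ₐ[k] B) : Jet A m →ₐ[k] Jet B m :=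
  Ideal.Quotient.liftₐ _
    ((Ideal.Quotient.mkₐ k _).comp (Polynomial.mapAlgHom f))
    (by
      intro p hp
      rw [Ideal.mem_span_singleton] at hp
      obtain ⟨q, rfl⟩ := hp
      rw [AlgHom.comp_apply, Ideal.Quotient.mkₐ_eq_mk, Ideal.Quotient.eq_zero_iff_mem,
        Ideal.mem_span_singleton]
      exact ⟨q.map f, by simp [Polynomial.mapAlgHom]⟩)

open Polynomial in
theorem jet_mk_eq_iff {A : Type} [CommRing A] {m : ℕ} (p q : A[X]) :
    (Ideal.Quotient.mk (Ideal.span {(X : A[X]) ^ (m + 1)}) p = Ideal.Quotient.mk _ q) ↔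
      ∀ j : Fin (m + 1), p.coeff j = q.coeff j := by
  rw [Ideal.Quotient.eq, Ideal.mem_span_singleton, X_pow_dvd_iff]
  constructor
  · intro h j
    have := h j j.2
    rwa [coeff_sub, sub_eq_zero] at this
  · intro h d hd
    rw [coeff_sub, sub_eq_zero]
    exact h ⟨d, hd⟩

/-- The `j`-th coefficient of a jet. -/
noncomputable def jetCoeff {A : Type} [CommRing A] {m : ℕ} (j : Fin (m + 1)) (x : Jet A m) : A :=
  (Function.surjInv (Ideal.Quotient.mk_surjective) x : Polynomial A).coeff j

theorem jetCoeff_mk {A : Type} [CommRing A] {m : ℕ} (j : Fin (m + 1)) (p : Polynomial A) :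
    jetCoeff j (Ideal.Quotient.mk _ p : Jet A m) = p.coeff j := by
  unfold jetCoeff
  exact (jet_mk_eq_iff _ _).1 (Function.surjInv_eq Ideal.Quotient.mk_surjective _) j

theorem jet_ext {A : Type} [CommRing A] {m : ℕ} {x y : Jet A m}
    (h : ∀ j, jetCoeff j x = jetCoeff j y) : x = y := by
  obtain ⟨p, rfl⟩ := Ideal.Quotient.mk_surjective x
  obtain ⟨q, rfl⟩ := Ideal.Quotient.mk_surjective y
  simp only [jetCoeff_mk] at h
  exact (jet_mk_eq_iff _ _).2 h

section
variable {k A B C : Type} [CommRing k] [CommRing A] [CommRing B] [CommRing C]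
    [Algebra k A] [Algebra k B] [Algebra k C] {m : ℕ}

theorem jetMap_mk (f : A →ₐ[k] B) (p : Polynomial A) :
    jetMap m f (Ideal.Quotient.mk _ p) = Ideal.Quotient.mk _ (p.map (f : A →+* B)) := rfl

theorem jetCoeff_jetMap (f : A →ₐ[k] B) (x : Jet A m) (j : Fin (m + 1)) :
    jetCoeff j (jetMap m f x) = f (jetCoeff j x) := by
  obtain ⟨p, rfl⟩ := Ideal.Quotient.mk_surjective x
  rw [jetMap_mk, jetCoeff_mk, jetCoeff_mk, Polynomial.coeff_map]
  rfl

theorem jetCoeff_zero (j : Fin (m + 1)) : jetCoeff j (0 : Jet A m) = 0 := by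
  rw [← map_zero (Ideal.Quotient.mk _), jetCoeff_mk, Polynomial.coeff_zero]

theorem jetMap_comp (f : A →ₐ[k] B) (g : B →ₐ[k] C) :
    jetMap m (g.comp f) = (jetMap m g).comp (jetMap m f) := by
  apply AlgHom.ext
  intro x
  apply jet_ext
  intro j
  simp [jetCoeff_jetMap]

theorem exists_jet (a : Fin (m + 1) → A) : ∃ x : Jet A m, ∀ j, jetCoeff j x = a j := by
  refine ⟨Ideal.Quotient.mk _ (∑ i : Fin (m + 1), Polynomial.monomial (i : ℕ) (a i)), ?_⟩
  intro j
  rw [jetCoeff_mk, Polynomial.finsetSum_coeff]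
  simp [Polynomial.coeff_monomial, Fin.val_inj]
end

/-- For a field `k`, `m ∈ ℕ` and a finitely generated commutative
`k`-algebra `R`, the covariant functor `A ↦ Hom_{k-alg}(R, A[t]/(t^{m+1}))` is
corepresentable by a finitely generated `k`-algebra `R_m`, via bijections natural in `A`. -/
theorem jet_functor_corepresentable (k : Type) [Field k] (m : ℕ)
    (R : Type) [CommRing R] [Algebra k R] (hR : Algebra.FiniteType k R) :
    ∃ (Rm : Type) (_ : CommRing Rm) (_ : Algebra k Rm) (_ : Algebra.FiniteType k Rm)
      (e : ∀ (A : Type) [CommRing A] [Algebra k A], (Rm →ₐ[k] A) ≃ (R →ₐ[k] Jet A m)),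
      ∀ (A B : Type) [CommRing A] [Algebra k A] [CommRing B] [Algebra k B]
        (f : A →ₐ[k] B) (φ : Rm →ₐ[k] A),
        e B (f.comp φ) = (jetMap m f).comp (e A φ) := by
  obtain ⟨n, π, hπ⟩ := Algebra.FiniteType.iff_quotient_mvPolynomial''.1 hR
  let P := MvPolynomial (Fin n × Fin (m + 1)) k
  choose u hu using fun i : Fin n =>
    exists_jet (A := P) (m := m) (fun j => MvPolynomial.X (i, j))
  let Φ : MvPolynomial (Fin n) k →ₐ[k] Jet P m := MvPolynomial.aeval u
  let J : Ideal P := Ideal.span {x | ∃ f j, π f = 0 ∧ x = jetCoeff j (Φ f)}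
  let q : P →ₐ[k] P ⧸ J := Ideal.Quotient.mkₐ k J
  have hΦ : ∀ f, π f = 0 → jetMap m q (Φ f) = 0 := by
    intro f hf
    apply jet_ext
    intro j
    rw [jetCoeff_jetMap, jetCoeff_zero]
    exact Ideal.Quotient.eq_zero_iff_mem.2 (Ideal.subset_span ⟨f, j, hf, rfl⟩)
  obtain ⟨U, hU⟩ : ∃ U : R →ₐ[k] Jet (P ⧸ J) m, ∀ f, U (π f) = jetMap m q (Φ f) := by
    refine ⟨(Ideal.Quotient.liftₐ (RingHom.ker π) ((jetMap m q).comp Φ)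
      (fun f hf => hΦ f hf)).comp
        (Ideal.quotientKerAlgEquivOfSurjective hπ).symm.toAlgHom, fun f => ?_⟩
    have : (Ideal.quotientKerAlgEquivOfSurjective hπ).symm (π f) =
        Ideal.Quotient.mk _ f := by
      rw [AlgEquiv.symm_apply_eq]
      rfl
    rw [AlgHom.comp_apply]
    exact congrArg (Ideal.Quotient.liftₐ (RingHom.ker π) ((jetMap m q).comp Φ) (fun f hf => hΦ f hf)) this
  have hUX : ∀ i j, jetCoeff j (U (π (MvPolynomial.X i))) = q (MvPolynomial.X (i, j)) := by
    intro i j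
    rw [hU, jetCoeff_jetMap, MvPolynomial.aeval_X, hu]
  have hbij : ∀ (A : Type) [CommRing A] [Algebra k A],
      Function.Bijective (fun φ : (P ⧸ J) →ₐ[k] A => (jetMap m φ).comp U) := by
    intro A _ _
    constructor
    · intro φ ψ h
      apply Ideal.Quotient.algHom_ext
      apply MvPolynomial.algHom_ext
      rintro ⟨i, j⟩
      have := congrArg (jetCoeff j) (DFunLike.congr_fun h (π (MvPolynomial.X i)))
      simpa only [AlgHom.comp_apply, jetCoeff_jetMap, hUX] using this
    · intro g
      let φ₀ : P →ₐ[k] A :=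
        MvPolynomial.aeval (fun ij => jetCoeff ij.2 (g (π (MvPolynomial.X ij.1))))
      have h0 : (jetMap m φ₀).comp Φ = g.comp π := by
        apply MvPolynomial.algHom_ext
        intro i
        apply jet_ext
        intro j
        rw [AlgHom.comp_apply, AlgHom.comp_apply, jetCoeff_jetMap, MvPolynomial.aeval_X, hu,
          MvPolynomial.aeval_X]
      have hJ : ∀ a ∈ J, φ₀ a = 0 := by
        intro a ha
        have hle : J ≤ RingHom.ker φ₀ := by
          apply Ideal.span_le.2
          rintro _ ⟨f, j, hf, rfl⟩
          change φ₀ _ = 0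
          have := DFunLike.congr_fun h0 f
          rw [AlgHom.comp_apply, AlgHom.comp_apply, hf, map_zero] at this
          rw [← jetCoeff_jetMap, this, jetCoeff_zero]
        exact hle ha
      refine ⟨Ideal.Quotient.liftₐ J φ₀ hJ, ?_⟩
      apply AlgHom.ext
      intro r
      obtain ⟨f, rfl⟩ := hπ r
      change jetMap m _ (U (π f)) = _
      rw [hU, ← AlgHom.comp_apply, ← jetMap_comp]
      exact DFunLike.congr_fun h0 f
  refine ⟨P ⧸ J, inferInstance, inferInstance, ?_,
    fun A _ _ => Equiv.ofBijective _ (hbij A), ?_⟩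
  · exact Algebra.FiniteType.of_surjective q (Ideal.Quotient.mkₐ_surjective k J)
  · intro A B _ _ _ _ f φ
    change (jetMap m (f.comp φ)).comp U = (jetMap m f).comp ((jetMap m φ).comp U)
    rw [jetMap_comp, AlgHom.comp_assoc]
end

section
/- Let k be a field and R a finitely generated commutative k-algebra. Then there exist a commutative k-algebra R_∞ and bijections Hom_{k-alg}(R_∞, A) ≅ Hom_{k-alg}(R, A[[t]]), natural in the commutative k-algebra A; that is, the covariant functor A ↦ Hom_{k-alg}(R, A[[t]]) from commutative k-algebras to sets is corepresentable. (This is the affine form of the universal property of the arc space X_∞.) -/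
/-- The `k`-algebra homomorphism `A[[t]] → B[[t]]` induced by a `k`-algebra
homomorphism `f : A → B` (apply `f` to coefficients). -/
def psMapAlgHom {k A B : Type} [CommRing k] [CommRing A] [CommRing B]
    [Algebra k A] [Algebra k B] (f : A →ₐ[k] B) : PowerSeries A →ₐ[k] PowerSeries B :=
  { PowerSeries.map (f : A →+* B) with
    commutes' := fun c => by
      simp [PowerSeries.algebraMap_apply] }

namespace ArcAux

open PowerSeries

variable (k : Type) [Field k] (R : Type) [CommRing R] [Algebra k R]

/-- Polynomial ring on the coefficients of a generic arc. -/
abbrev P : Type := MvPolynomial (R × ℕ) k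

/-- The generic series. -/
noncomputable def gen (r : R) : PowerSeries (P k R) :=
  PowerSeries.mk fun n => MvPolynomial.X (r, n)

variable {k R}

/-- Evaluation of polynomials at an arc. -/
noncomputable def ev {A : Type} [CommRing A] [Algebra k A] (g : R →ₐ[k] PowerSeries A) :
    P k R →ₐ[k] A :=
  MvPolynomial.aeval fun p => PowerSeries.coeff p.2 (g p.1)

theorem coeff_psMap {A B : Type} [CommRing A] [CommRing B]
    [Algebra k A] [Algebra k B] (f : A →ₐ[k] B) (x : PowerSeries A) (n : ℕ) :
    PowerSeries.coeff n (psMapAlgHom f x) = f (PowerSeries.coeff n x) :=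
  PowerSeries.coeff_map _ _ _

theorem psMap_ev {A : Type} [CommRing A] [Algebra k A] (g : R →ₐ[k] PowerSeries A) (r : R) :
    psMapAlgHom (ev g) (gen k R r) = g r := by
  ext n
  rw [coeff_psMap]
  simp [gen, ev]

variable (k R)

/-- Ideal of relations satisfied by all arcs. -/
noncomputable def I : Ideal (P k R) :=
  Ideal.span {p | ∀ (A : Type) [CommRing A] [Algebra k A] (g : R →ₐ[k] PowerSeries A), ev g p = 0}

/-- The corepresenting algebra. -/
abbrev Q : Type := P k R ⧸ I k R

variable {k R}

theorem ev_mem {A : Type} [CommRing A] [Algebra k A] (g : R →ₐ[k] PowerSeries A)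
    (p : P k R) (hp : p ∈ I k R) : ev g p = 0 := by
  have : I k R ≤ RingHom.ker (ev g) := Ideal.span_le.2 fun q hq => hq A g
  exact this hp

theorem eq_of (x y : PowerSeries (P k R))
    (h : ∀ (A : Type) [CommRing A] [Algebra k A] (g : R →ₐ[k] PowerSeries A),
      psMapAlgHom (ev g) x = psMapAlgHom (ev g) y) :
    psMapAlgHom (Ideal.Quotient.mkₐ k (I k R)) x = psMapAlgHom (Ideal.Quotient.mkₐ k (I k R)) y := by
  ext n
  rw [coeff_psMap, coeff_psMap]
  refine Ideal.Quotient.eq.2 (Ideal.subset_span ?_)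
  intro A _ _ g
  rw [map_sub, ← coeff_psMap, ← coeff_psMap, h A g, sub_self]

variable (k R)

/-- The universal arc. -/
noncomputable def univ : R →ₐ[k] PowerSeries (Q k R) :=
  AlgHom.mk
    { toFun := fun r => psMapAlgHom (Ideal.Quotient.mkₐ k (I k R)) (gen k R r)
      map_one' := by
        rw [← map_one (psMapAlgHom (Ideal.Quotient.mkₐ k (I k R)))]
        apply eq_of
        intro A _ _ g
        rw [psMap_ev, map_one, map_one]
      map_zero' := by
        rw [← map_zero (psMapAlgHom (Ideal.Quotient.mkₐ k (I k R)))]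
        apply eq_of
        intro A _ _ g
        rw [psMap_ev, map_zero, map_zero]
      map_add' := fun r s => by
        rw [← map_add]
        apply eq_of
        intro A _ _ g
        rw [map_add, psMap_ev, psMap_ev, psMap_ev, map_add]
      map_mul' := fun r s => by
        rw [← map_mul]
        apply eq_of
        intro A _ _ g
        rw [map_mul, psMap_ev, psMap_ev, psMap_ev, map_mul] }
    (fun c => by
      change psMapAlgHom (Ideal.Quotient.mkₐ k (I k R)) (gen k R (algebraMap k R c)) = _
      rw [← AlgHom.commutes (psMapAlgHom (Ideal.Quotient.mkₐ k (I k R)))]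
      apply eq_of
      intro A _ _ g
      rw [psMap_ev, AlgHom.commutes, AlgHom.commutes])

variable {k R}

theorem coeff_univ (r : R) (n : ℕ) : PowerSeries.coeff n (univ k R r) =
    Ideal.Quotient.mkₐ k (I k R) (MvPolynomial.X (r, n)) := by
  change PowerSeries.coeff n (psMapAlgHom (Ideal.Quotient.mkₐ k (I k R)) (gen k R r)) = _
  rw [coeff_psMap, gen, PowerSeries.coeff_mk]

/-- The bijection. -/
noncomputable def equiv (A : Type) [CommRing A] [Algebra k A] :
    (Q k R →ₐ[k] A) ≃ (R →ₐ[k] PowerSeries A) where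
  toFun φ := (psMapAlgHom φ).comp (univ k R)
  invFun g := Ideal.Quotient.liftₐ (I k R) (ev g) (ev_mem g)
  left_inv φ := by
    apply Ideal.Quotient.algHom_ext
    apply MvPolynomial.algHom_ext
    rintro ⟨r, n⟩
    change ev _ (MvPolynomial.X (r, n)) = φ (Ideal.Quotient.mkₐ k (I k R) (MvPolynomial.X (r, n)))
    rw [ev, MvPolynomial.aeval_X, AlgHom.comp_apply, coeff_psMap, coeff_univ]
  right_inv g := by
    ext r n
    rw [AlgHom.comp_apply, coeff_psMap, coeff_univ]
    change ev g (MvPolynomial.X (r, n)) = _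
    rw [ev, MvPolynomial.aeval_X]

end ArcAux

/-- For a field `k` and a finitely generated commutative `k`-algebra `R`,
the covariant functor `A ↦ Hom_{k-alg}(R, A[[t]])` from commutative `k`-algebras to sets
is corepresentable by a commutative `k`-algebra `R_∞`, via bijections natural in `A`.
(Affine form of the universal property of the arc space `X_∞`.) -/
theorem arc_functor_corepresentable (k : Type) [Field k]
    (R : Type) [CommRing R] [Algebra k R] (hR : Algebra.FiniteType k R) :
    ∃ (Rinf : Type) (_ : CommRing Rinf) (_ : Algebra k Rinf)
      (e : ∀ (A : Type) [CommRing A] [Algebra k A], (Rinf →ₐ[k] A) ≃ (R →ₐ[k] PowerSeries A)),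
      ∀ (A B : Type) [CommRing A] [Algebra k A] [CommRing B] [Algebra k B]
        (f : A →ₐ[k] B) (φ : Rinf →ₐ[k] A),
        e B (f.comp φ) = (psMapAlgHom f).comp (e A φ) := by
  refine ⟨ArcAux.Q k R, inferInstance, inferInstance, fun A _ _ => ArcAux.equiv A, ?_⟩
  intro A B _ _ _ _ f φ
  ext r n
  change PowerSeries.coeff n (psMapAlgHom (f.comp φ) (ArcAux.univ k R r)) =
    PowerSeries.coeff n (psMapAlgHom f (psMapAlgHom φ (ArcAux.univ k R r)))
  simp only [ArcAux.coeff_psMap, AlgHom.comp_apply]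
end

section
/- Let k be an algebraically closed field and let P = k[x_1, x_2, x_3, …] be the polynomial ring over k in countably infinitely many variables. Then the following are equivalent: (i) for every maximal ideal m of P the natural map k → P/m is surjective (i.e., every maximal ideal of P has residue field k, so every closed point of Spec P is a k-valued point); (ii) k is uncountable. -/
/-- Let `k` be an algebraically closed field and
`P = k[x_1, x_2, …]` the polynomial ring over `k` in countably infinitely many
variables. Every maximal ideal of `P` has residue field `k` (i.e. every closed point
of `Spec P` is a `k`-valued point) if and only if `k` is uncountable. -/
theorem every_closed_point_of_affine_infinity_is_k_valued_iff_uncountable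
    (k : Type) [Field k] [IsAlgClosed k] :
    (∀ m : Ideal (MvPolynomial ℕ k), m.IsMaximal →
        Function.Surjective (algebraMap k (MvPolynomial ℕ k ⧸ m))) ↔
      ¬ Countable k := by
  constructor
  · intro h hk
    have hp : Countable (Polynomial k) := by
      rw [← Cardinal.mk_le_aleph0_iff]
      exact Polynomial.cardinalMk_le_max.trans (max_le (Cardinal.mk_le_aleph0_iff.2 hk) le_rfl)
    have hc : Countable (RatFunc k) := by
      have hs : Function.Surjective (fun p : Polynomial k × Polynomial k =>
          algebraMap (Polynomial k) (RatFunc k) p.1 / algebraMap (Polynomial k) (RatFunc k) p.2) :=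
        fun x => ⟨(x.num, x.denom), x.num_div_denom⟩
      exact hs.countable
    obtain ⟨f, hf⟩ := exists_surjective_nat (RatFunc k)
    let φ : MvPolynomial ℕ k →ₐ[k] RatFunc k := MvPolynomial.aeval f
    have hφ : Function.Surjective φ := fun x => by
      obtain ⟨n, rfl⟩ := hf x
      exact ⟨MvPolynomial.X n, by simp [φ]⟩
    have hm : (RingHom.ker φ).IsMaximal := RingHom.ker_isMaximal_of_surjective φ hφ
    obtain ⟨p, hp⟩ := hφ RatFunc.X
    obtain ⟨c, hc⟩ := h _ hm (Ideal.Quotient.mk _ p)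
    have h2 : Ideal.Quotient.mk (RingHom.ker φ) (MvPolynomial.C c) =
      Ideal.Quotient.mk (RingHom.ker φ) p := hc
    rw [Ideal.Quotient.eq, RingHom.mem_ker, map_sub, hp, sub_eq_zero] at h2
    have h3 : algebraMap k (RatFunc k) c = RatFunc.X := by
      rw [← h2]; simp [φ]
    have h4 : algebraMap (Polynomial k) (RatFunc k) (Polynomial.C c) =
        algebraMap (Polynomial k) (RatFunc k) Polynomial.X := by
      simpa using h3
    exact Polynomial.X_ne_C c (RatFunc.algebraMap_injective k h4).symm
  · intro hk m hm
    let _ : Field (MvPolynomial ℕ k ⧸ m) := Ideal.Quotient.field m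
    have : Algebra.IsAlgebraic k (MvPolynomial ℕ k ⧸ m) := by
      refine ⟨fun x => ?_⟩
      by_contra hx
      have hx : Transcendental k x := hx
      have h1 := hx.linearIndependent_sub_inv.cardinal_le_rank
      have h2 : Module.rank k (MvPolynomial ℕ k ⧸ m) ≤ Module.rank k (MvPolynomial ℕ k) :=
        (Ideal.Quotient.mkₐ k m).toLinearMap.rank_le_of_surjective
          (Ideal.Quotient.mkₐ_surjective k m)
      rw [MvPolynomial.rank_eq_lift, Cardinal.lift_id] at h2
      exact hk (Cardinal.mk_le_aleph0_iff.1
        ((h1.trans h2).trans (Cardinal.mk_le_aleph0_iff.2 inferInstance)))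
    exact (IsAlgClosed.algebraMap_bijective_of_isIntegral (k := k)).2
end

section
/- Let k be a field, M and X schemes over k, π : M → X and σ : X → M morphisms of k-schemes with π ∘ σ = id_X, and μ : 𝔸¹_k ×_{Spec k} M → M a morphism of k-schemes whose composite with the zero-section M ≅ Spec k ×_{Spec k} M → 𝔸¹_k ×_{Spec k} M (induced by the point t = 0 of 𝔸¹_k) equals σ ∘ π. Let o ∈ 𝔸¹_k be the closed point corresponding to the maximal ideal (t), and let pr₁, pr₂ denote the two projections from 𝔸¹_k ×_{Spec k} M. If Z ⊆ M is a closed subset such that, on underlying topological spaces, μ(pr₁^{-1}(𝔸¹_k ∖ {o}) ∩ pr₂^{-1}(Z)) = Z, then π(Z) = σ^{-1}(Z); in particular the image π(Z) is closed in X. -/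
open AlgebraicGeometry CategoryTheory Limits

noncomputable section

variable (k : Type) [Field k]

/-- The affine line `𝔸¹_k = Spec k[t]`. -/
abbrev A1 := Spec (CommRingCat.of (Polynomial k))

/-- The structure morphism `𝔸¹_k → Spec k`. -/
def a1Struct : A1 k ⟶ Speck k :=
  Spec.map (CommRingCat.ofHom (algebraMap k (Polynomial k)))

/-- The `k`-point `t = 0` of `𝔸¹_k`. -/
def a1Zero : Speck k ⟶ A1 k :=
  Spec.map (CommRingCat.ofHom (Polynomial.aeval (0 : k) : Polynomial k →ₐ[k] k).toRingHom)

lemma a1Zero_a1Struct : a1Zero k ≫ a1Struct k = 𝟙 (Speck k) := by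
  rw [a1Zero, a1Struct, ← Spec.map_comp, ← Spec.map_id]
  congr 1
  ext c
  simp

/-- The closed point `o` of `𝔸¹_k` corresponding to the maximal ideal `(t)`. -/
def a1Origin : A1 k :=
  (⟨Ideal.span {Polynomial.X},
    (Ideal.span_singleton_prime Polynomial.X_ne_zero).mpr Polynomial.prime_X⟩ :
      PrimeSpectrum (Polynomial k))

end

open AlgebraicGeometry CategoryTheory Limits in
/-- Let `π : M → X` and `σ : X → M` be `k`-morphisms with `π ∘ σ = id`, and
let `μ : 𝔸¹_k ×_{Spec k} M → M` be a `k`-morphism whose composite with the zero-section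
`M → 𝔸¹_k ×_{Spec k} M` equals `σ ∘ π`. If `Z ⊆ M` is a closed subset with
`μ(pr₁^{-1}(𝔸¹_k ∖ {o}) ∩ pr₂^{-1}(Z)) = Z`, then `π(Z) = σ^{-1}(Z)`; in particular
`π(Z)` is closed in `X`. -/
theorem image_of_invariant_closed_is_closed (k : Type) [Field k]
    (M X : Scheme) (sM : M ⟶ Speck k) (sX : X ⟶ Speck k)
    (π : M ⟶ X) (σ : X ⟶ M)
    (hπ : π ≫ sX = sM) (hσ : σ ≫ sM = sX) (hsec : σ ≫ π = 𝟙 X)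
    (μ : pullback (a1Struct k) sM ⟶ M)
    (hμ : μ ≫ sM = pullback.snd (a1Struct k) sM ≫ sM)
    (hzero : pullback.lift (sM ≫ a1Zero k) (𝟙 M)
        (by rw [Category.assoc, a1Zero_a1Struct, Category.comp_id, Category.id_comp]) ≫ μ
      = π ≫ σ)
    (Z : Set M) (hZ : IsClosed Z)
    (hinv : μ.base ''
        ((pullback.fst (a1Struct k) sM).base ⁻¹' {a1Origin k}ᶜ ∩
          (pullback.snd (a1Struct k) sM).base ⁻¹' Z) = Z) :
    π.base '' Z = σ.base ⁻¹' Z ∧ IsClosed (π.base '' Z) := by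
  have key : ∀ z ∈ Z, σ.base (π.base z) ∈ Z := by
    intro z hz
    let K := M.residueField z
    let p : Spec K ⟶ M := M.fromSpecResidueField z
    obtain ⟨φ, hφ⟩ : ∃ φ : CommRingCat.of k ⟶ K, Spec.map φ = p ≫ sM :=
      ⟨Spec.preimage (p ≫ sM), Spec.map_preimage _⟩
    let q : Spec (CommRingCat.of (Polynomial K)) ⟶ A1 k :=
      Spec.map (CommRingCat.ofHom (Polynomial.mapRingHom φ.hom))
    let ringC : K ⟶ CommRingCat.of (Polynomial K) :=
      CommRingCat.ofHom (Polynomial.C : K →+* Polynomial K)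
    let ringE : CommRingCat.of (Polynomial K) ⟶ K :=
      CommRingCat.ofHom (Polynomial.evalRingHom (0 : K))
    let c : Spec (CommRingCat.of (Polynomial K)) ⟶ Spec K := Spec.map ringC
    let e : Spec K ⟶ Spec (CommRingCat.of (Polynomial K)) := Spec.map ringE
    have hqc : q ≫ a1Struct k = (c ≫ p) ≫ sM := by
      rw [Category.assoc, ← hφ]
      refine (Spec.map_comp _ _).symm.trans (Eq.trans (congrArg Spec.map ?_) (Spec.map_comp _ _))
      ext a
      simp [ringC]
      rfl
    have hec : e ≫ c = 𝟙 _ := by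
      refine (Spec.map_comp _ _).symm.trans (Eq.trans (congrArg Spec.map ?_) (Spec.map_id _))
      ext a
      exact Polynomial.eval_C
    have heq : e ≫ q = (p ≫ sM) ≫ a1Zero k := by
      rw [← hφ]
      refine (Spec.map_comp _ _).symm.trans (Eq.trans (congrArg Spec.map ?_) (Spec.map_comp _ _))
      ext a
      · simp
        exact Polynomial.eval_C
      · simp
        exact Polynomial.eval_X
    let g := pullback.lift q (c ≫ p) hqc
    have hs : pullback.lift (f := a1Struct k) (g := sM) (sM ≫ a1Zero k) (𝟙 M)
        (by rw [Category.assoc, a1Zero_a1Struct, Category.comp_id, Category.id_comp]) ≫ μ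
        = π ≫ σ := hzero
    have heg : e ≫ g ≫ μ = p ≫ π ≫ σ := by
      rw [← hs, ← Category.assoc, ← Category.assoc]
      congr 1
      apply pullback.hom_ext
      · simp only [g, Category.assoc, pullback.lift_fst, heq]
      · simp only [g, Category.assoc, pullback.lift_snd, Category.comp_id]
        rw [← Category.assoc, hec, Category.id_comp]
    let x : Spec K := IsLocalRing.closedPoint K
    have hpx : ∀ y : Spec K, p.base y = z := fun y =>
      Scheme.fromSpecResidueField_apply z y
    let η : Spec (CommRingCat.of (Polynomial K)) :=
      (⟨⊥, Ideal.isPrime_bot⟩ : PrimeSpectrum (Polynomial K))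
    have hsp : η ⤳ e.base x :=
      (PrimeSpectrum.le_iff_specializes
        (⟨⊥, Ideal.isPrime_bot⟩ : PrimeSpectrum (Polynomial K)) (e.base x)).mp
        (show (⊥ : Ideal (Polynomial K)) ≤ _ from bot_le)
    have hsp2 : (g ≫ μ).base η ⤳ (g ≫ μ).base (e.base x) :=
      hsp.map (g ≫ μ).continuous
    have h1 : (g ≫ μ).base (e.base x) = σ.base (π.base z) := by
      have := congrArg (fun f : Spec K ⟶ M => f.base x) heg
      have h2 : (g ≫ μ).base (e.base x) = σ.base (π.base (p.base x)) := this
      rw [h2, hpx]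
    rw [← h1]
    refine hsp2.mem_closed hZ ?_
    rw [← hinv]
    refine ⟨g.base η, ⟨?_, ?_⟩, rfl⟩
    · intro h
      have h3 : (g ≫ pullback.fst (a1Struct k) sM).base η = a1Origin k := h
      simp only [g, pullback.lift_fst] at h3
      have h4 : (Polynomial.X : Polynomial k) ∈ (q.base η).asIdeal := by
        rw [h3]; exact Ideal.mem_span_singleton_self _
      have h5 : Polynomial.mapRingHom φ.hom Polynomial.X ∈ (⊥ : Ideal (Polynomial K)) := h4
      simp at h5
    · have h3 : (g ≫ pullback.snd (a1Struct k) sM).base η = z := by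
        simp only [g, pullback.lift_snd]
        exact hpx _
      have h4 : (pullback.snd (a1Struct k) sM).base (g.base η) = z := h3
      change (pullback.snd (a1Struct k) sM).base (g.base η) ∈ Z
      rw [h4]
      exact hz
  have himg : π.base '' Z = σ.base ⁻¹' Z := by
    have hsx : ∀ x, π.base (σ.base x) = x := fun x =>
      congrArg (fun f : X ⟶ X => f.base x) hsec
    ext x
    constructor
    · rintro ⟨z, hz, rfl⟩
      exact key z hz
    · intro hx
      exact ⟨σ.base x, hx, hsx x⟩
  exact ⟨himg, himg ▸ hZ.preimage σ.continuous⟩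
end

section
/- Let k be a field, m a natural number, and f : R → S a surjective homomorphism of commutative k-algebras. Suppose R_m corepresents the functor A ↦ Hom_{k-alg}(R, A[t]/(t^{m+1})) and S_m corepresents the functor A ↦ Hom_{k-alg}(S, A[t]/(t^{m+1})), via bijections natural in the commutative k-algebra A. Let h : R_m → S_m be the unique k-algebra homomorphism such that for every commutative k-algebra A the square formed by the two corepresenting bijections, precomposition with h, and precomposition with f commutes (h exists and is unique by the Yoneda lemma). Then h is surjective. (This is the affine form of the statement that a closed immersion X → Y induces a closed immersion X_m → Y_m of m-jet schemes.) -/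
theorem jetMap_injective_aux {k A B : Type} [CommRing k] [CommRing A] [CommRing B]
    [Algebra k A] [Algebra k B] (m : ℕ) (g : A →ₐ[k] B) (hg : Function.Injective g) :
    Function.Injective (jetMap m g) := by
  rw [injective_iff_map_eq_zero]
  intro x hx
  obtain ⟨p, rfl⟩ := Ideal.Quotient.mk_surjective x
  have h1 : Ideal.Quotient.mk (Ideal.span {(Polynomial.X : Polynomial B) ^ (m + 1)})
      (p.map (g : A →+* B)) = 0 := hx
  rw [Ideal.Quotient.eq_zero_iff_mem, Ideal.mem_span_singleton, Polynomial.X_pow_dvd_iff] at h1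
  rw [Ideal.Quotient.eq_zero_iff_mem, Ideal.mem_span_singleton, Polynomial.X_pow_dvd_iff]
  intro d hd
  have h2 := h1 d hd
  rw [Polynomial.coeff_map] at h2
  exact hg (h2.trans (map_zero g).symm)

/-- Let `f : R → S` be a surjective homomorphism of commutative
`k`-algebras, let `R_m` and `S_m` corepresent the `m`-jet functors of `R` and `S`
(naturally in `A`), and let `h : R_m → S_m` be the `k`-algebra homomorphism making the
evident squares commute. Then `h` is surjective. (Affine form of: a closed immersion
`X → Y` induces a closed immersion `X_m → Y_m`.) -/
theorem jet_of_surjective_is_surjective (k : Type) [Field k] (m : ℕ)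
    (R S : Type) [CommRing R] [CommRing S] [Algebra k R] [Algebra k S]
    (f : R →ₐ[k] S) (hf : Function.Surjective f)
    (Rm Sm : Type) [CommRing Rm] [CommRing Sm] [Algebra k Rm] [Algebra k Sm]
    (eR : ∀ (A : Type) [CommRing A] [Algebra k A], (Rm →ₐ[k] A) ≃ (R →ₐ[k] Jet A m))
    (eRnat : ∀ (A B : Type) [CommRing A] [Algebra k A] [CommRing B] [Algebra k B]
      (g : A →ₐ[k] B) (φ : Rm →ₐ[k] A), eR B (g.comp φ) = (jetMap m g).comp (eR A φ))
    (eS : ∀ (A : Type) [CommRing A] [Algebra k A], (Sm →ₐ[k] A) ≃ (S →ₐ[k] Jet A m))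
    (eSnat : ∀ (A B : Type) [CommRing A] [Algebra k A] [CommRing B] [Algebra k B]
      (g : A →ₐ[k] B) (ψ : Sm →ₐ[k] A), eS B (g.comp ψ) = (jetMap m g).comp (eS A ψ))
    (h : Rm →ₐ[k] Sm)
    (hsquare : ∀ (A : Type) [CommRing A] [Algebra k A] (ψ : Sm →ₐ[k] A),
      eR A (ψ.comp h) = ((eS A ψ) : S →ₐ[k] Jet A m).comp f) :
    Function.Surjective h := by
  have hinj := jetMap_injective_aux m h.range.val Subtype.val_injective
  have hfac : h.range.val.comp h.rangeRestrict = h := by ext; rfl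
  have key : (jetMap m h.range.val).comp (eR h.range h.rangeRestrict) =
      (eS Sm (AlgHom.id k Sm)).comp f := by
    rw [← eRnat, ← hsquare, hfac, AlgHom.id_comp]
  have hker : ∀ a : R, a ∈ RingHom.ker f → eR h.range h.rangeRestrict a = 0 := by
    intro a ha
    apply hinj
    have h1 := DFunLike.congr_fun key a
    simp only [AlgHom.comp_apply] at h1
    rw [h1, (RingHom.mem_ker).1 ha, map_zero, map_zero]
  let v : S →ₐ[k] Jet h.range m :=
    (Ideal.Quotient.liftₐ (RingHom.ker f) (eR h.range h.rangeRestrict) hker).comp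
      (Ideal.quotientKerAlgEquivOfSurjective hf).symm.toAlgHom
  have hv : ∀ a : R, v (f a) = eR h.range h.rangeRestrict a := by
    intro a
    have h1 : (Ideal.quotientKerAlgEquivOfSurjective hf).symm (f a) =
        Ideal.Quotient.mk (RingHom.ker f) a := by
      rw [AlgEquiv.symm_apply_eq]; rfl
    change Ideal.Quotient.liftₐ (RingHom.ker f) (eR h.range h.rangeRestrict) hker
      ((Ideal.quotientKerAlgEquivOfSurjective hf).symm (f a)) = _
    rw [h1]; rfl
  have hid : h.range.val.comp ((eS h.range).symm v) = AlgHom.id k Sm := by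
    apply (eS Sm).injective
    rw [eSnat, Equiv.apply_symm_apply]
    ext s
    obtain ⟨a, rfl⟩ := hf s
    rw [AlgHom.comp_apply, hv]
    exact DFunLike.congr_fun key a
  intro s
  have h1 : ((((eS h.range).symm v) s : h.range) : Sm) = s := DFunLike.congr_fun hid s
  obtain ⟨r, hr⟩ := (((eS h.range).symm v) s).2
  exact ⟨r, hr.trans h1⟩
end

section
/- Let k be an algebraically closed field of characteristic zero and R a finitely generated commutative k-algebra that is an integral domain. Let R_∞ be a commutative k-algebra corepresenting the arc functor of R, i.e., equipped with bijections Hom_{k-alg}(R_∞, A) ≅ Hom_{k-alg}(R, A[[t]]) natural in the commutative k-algebra A. Then the prime spectrum Spec R_∞ is an irreducible topological space. (This is the affine form of the theorem that in characteristic zero the space of arcs of a variety is irreducible.) -/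
section ArcHelpers

open PowerSeries

lemma arc_formallySmooth_field (K L : Type) [Field K] [Field L] [Algebra K L] [CharZero K] :
    Algebra.FormallySmooth K L := by
  obtain ⟨s, hs⟩ := exists_isTranscendenceBasis K L
  have h := hs.isAlgebraic_field
  have : Algebra.IsSeparable (IntermediateField.adjoin K (Set.range ((↑) : s → L))) L :=
    inferInstance
  exact .of_algebraicIndependent_of_isSeparable hs.1

lemma arc_ker_constantCoeff (S : Type) [CommRing S] :
    RingHom.ker (constantCoeff (R := S)) = Ideal.span {X} := by
  ext f
  rw [RingHom.mem_ker, Ideal.mem_span_singleton, PowerSeries.X_dvd_iff]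

lemma arc_lift_ps {A B S : Type} [CommRing A] [CommRing B] [CommRing S] [Algebra A B]
    [Algebra.FormallySmooth A B] (a : A →+* PowerSeries S) (b : B →+* S)
    (h : b.comp (algebraMap A B) = (constantCoeff).comp a) :
    ∃ d : B →+* PowerSeries S, d.comp (algebraMap A B) = a ∧ (constantCoeff).comp d = b := by
  let _ : Algebra A (PowerSeries S) := a.toAlgebra
  let q : S →+* PowerSeries S ⧸ (Ideal.span {X} : Ideal (PowerSeries S)) :=
    (Ideal.Quotient.mk _).comp (C)
  have hq : ∀ f : PowerSeries S, q (constantCoeff f) = Ideal.Quotient.mk _ f := by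
    intro f
    refine Ideal.Quotient.eq.mpr ?_
    rw [← arc_ker_constantCoeff, RingHom.mem_ker]
    simp
  let b' : B →ₐ[A] PowerSeries S ⧸ (Ideal.span {X} : Ideal (PowerSeries S)) :=
    { q.comp b with
      commutes' := fun r => by
        have := congr($h r)
        simp only [RingHom.comp_apply] at this
        show q (b _) = _
        rw [this, hq]
        rfl }
  obtain ⟨g, hg⟩ := Algebra.FormallySmooth.exists_mkₐ_comp_eq_of_isAdicComplete b'
  refine ⟨g.toRingHom, ?_, ?_⟩
  · ext1 r
    exact g.commutes r
  · ext1 x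
    have h1 : Ideal.Quotient.mk _ (g x) = q (b x) := congr($hg x)
    have h2 : g x - C (b x) ∈ (Ideal.span {X} : Ideal (PowerSeries S)) := Ideal.Quotient.eq.mp h1
    rw [← arc_ker_constantCoeff, RingHom.mem_ker] at h2
    simpa [sub_eq_zero] using h2

lemma arc_lift_unique {A B S : Type} [CommRing A] [CommRing B] [CommRing S] [Algebra A B]
    [Algebra.FormallyUnramified A B] (d d' : B →+* PowerSeries S)
    (h : d.comp (algebraMap A B) = d'.comp (algebraMap A B))
    (h0 : (constantCoeff).comp d = (constantCoeff).comp d') : d = d' := by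
  let _ : Algebra A (PowerSeries S) := (d.comp (algebraMap A B)).toAlgebra
  let f : B →ₐ[A] PowerSeries S := { d with commutes' := fun r => rfl }
  let f' : B →ₐ[A] PowerSeries S := { d' with commutes' := fun r => congr($h.symm r) }
  have : f = f' := by
    refine Algebra.FormallyUnramified.ext_of_iInf (I := Ideal.span {X}) ?_ ?_
    · have := IsHausdorff.iInf_pow_smul (I := Ideal.span {(X : PowerSeries S)})
        (M := PowerSeries S) inferInstance
      simpa using this
    · intro x
      refine Ideal.Quotient.eq.mpr ?_
      rw [← arc_ker_constantCoeff, RingHom.mem_ker, map_sub, sub_eq_zero]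
      exact congr($h0 x)
  ext1 x
  exact congr($this x)

/-- swapping the variables -/
noncomputable def arcSwap (S : Type) [CommRing S] :
    PowerSeries (PowerSeries S) →+* PowerSeries (PowerSeries S) where
  toFun f := PowerSeries.mk fun n => PowerSeries.mk fun m => coeff n (coeff m f)
  map_one' := by
    ext n m
    simp only [coeff_mk, coeff_one]
    split_ifs <;> simp_all [coeff_one]
  map_zero' := by ext n m; simp
  map_add' f g := by ext n m; simp
  map_mul' f g := by
    ext n m
    simp only [coeff_mk, coeff_mul, map_sum]
    rw [Finset.sum_comm]

noncomputable def arcTaylor (S : Type) [CommRing S] :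
    PowerSeries S →+* PowerSeries (PowerSeries S) where
  toFun f := PowerSeries.mk fun n => PowerSeries.mk fun m => ((m + n).choose n : S) * coeff (m + n) f
  map_one' := by
    ext n m
    simp only [coeff_mk, coeff_one]
    rcases n with _ | n
    · simp [coeff_one]
    · simp
  map_zero' := by ext n m; simp
  map_add' f g := by ext n m; simp [mul_add]
  map_mul' f g := by
    ext n m
    simp only [coeff_mk, coeff_mul, map_sum]
    have key : ∀ x ∈ Finset.HasAntidiagonal.antidiagonal (m + n), ((m + n).choose n : S) * (coeff x.1 f * coeff x.2 g)
       = ∑ y ∈ Finset.HasAntidiagonal.antidiagonal n, (x.1.choose y.1 * coeff x.1 f) * (x.2.choose y.2 * coeff x.2 g) := by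
      intro x hx
      rw [← Finset.HasAntidiagonal.mem_antidiagonal.mp hx, Nat.add_choose_eq]
      push_cast
      rw [Finset.sum_mul]
      exact Finset.sum_congr rfl fun y _ => by ring
    rw [Finset.mul_sum, Finset.sum_congr rfl key, Finset.sum_comm]
    refine Finset.sum_congr rfl fun y hy => ?_
    have hy := Finset.HasAntidiagonal.mem_antidiagonal.mp hy
    symm
    refine Finset.sum_bij_ne_zero (fun x _ _ => (x.1 + y.1, x.2 + y.2)) ?_ ?_ ?_ ?_
    · rintro ⟨a, b⟩ h _
      simp only [Finset.HasAntidiagonal.mem_antidiagonal] at h ⊢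
      omega
    · rintro ⟨a, b⟩ h _ ⟨a', b'⟩ h' _ e
      simp only [Prod.mk.injEq] at e ⊢
      omega
    · rintro ⟨c, d⟩ h hne
      have h1 : y.1 ≤ c := by
        by_contra hc
        exact hne (by simp [Nat.choose_eq_zero_of_lt (not_le.mp hc)])
      have h2 : y.2 ≤ d := by
        by_contra hc
        exact hne (by simp [Nat.choose_eq_zero_of_lt (not_le.mp hc)])
      simp only [Finset.HasAntidiagonal.mem_antidiagonal] at h
      refine ⟨(c - y.1, d - y.2), ?_, ?_, ?_⟩
      · simp only [Finset.HasAntidiagonal.mem_antidiagonal]; omega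
      · simpa [Nat.sub_add_cancel h1, Nat.sub_add_cancel h2] using hne
      · simp [Nat.sub_add_cancel h1, Nat.sub_add_cancel h2]
    · intro x _ _; rfl


lemma arc_coeff_family (k V : Type) [Field k] [CharZero k] [CommRing V] (M : Ideal V)
    [M.IsMaximal] [Algebra k V] : ∃ σ : ∀ n : ℕ, (V ⧸ M) →+* V ⧸ M ^ n,
      (∀ (m n : ℕ) (h : m ≤ n) (x), Ideal.Quotient.factorPow _ h (σ n x) = σ m x) ∧
      (∀ n (c : k), σ n (algebraMap k _ c) = algebraMap k _ c) ∧
      (∀ n (v w : V), n ≠ 0 → σ n (Ideal.Quotient.mk _ v) = Ideal.Quotient.mk _ w →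
        v - w ∈ M) := by
  let _ : Field (V ⧸ M) := Ideal.Quotient.field _
  have := arc_formallySmooth_field k (V ⧸ M)
  obtain ⟨g, hg⟩ := Algebra.FormallySmooth.exists_adicCompletionEvalOneₐ_comp_eq
    (R := k) (I := M) (AlgHom.id k (V ⧸ M))
  have hcompat : ∀ (m n : ℕ) (h : m ≤ n) (x : AdicCompletion M V), Ideal.Quotient.factorPow M h
      (AdicCompletion.evalₐ M n x) = AdicCompletion.evalₐ M m x := by
    intro m n h x
    induction x using AdicCompletion.induction_on with
    | _ a =>
    rw [AdicCompletion.evalₐ_mk, AdicCompletion.evalₐ_mk]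
    exact AdicCompletion.Ideal.mk_eq_mk M h a
  refine ⟨fun n => (((AdicCompletion.evalₐ M n).restrictScalars k).comp g).toRingHom,
    ?_, ?_, ?_⟩
  · intro m n h x
    exact hcompat m n h _
  · intro n c
    exact AlgHom.commutes (((AdicCompletion.evalₐ M n).restrictScalars k).comp g) c
  · intro n v w hn hvw
    have h1 : AdicCompletion.evalOneₐ M (g (Ideal.Quotient.mk _ v)) = Ideal.Quotient.mk _ v :=
      congr($hg (Ideal.Quotient.mk _ v))
    have h2 : AdicCompletion.evalₐ M n (g (Ideal.Quotient.mk _ v)) = Ideal.Quotient.mk _ w := hvw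
    rw [← AdicCompletion.factorₐ_evalₐ_one, ← hcompat 1 n (by omega), h2] at h1
    exact Ideal.Quotient.eq.mp h1.symm

lemma arc_dvr_embed (k V : Type) [Field k] [CharZero k] [CommRing V] [IsDomain V]
    [IsDiscreteValuationRing V] [Algebra k V]
    (M : Ideal V) [M.IsMaximal] :
    ∃ Φ : V →+* PowerSeries (V ⧸ M),
      Function.Injective Φ ∧ (constantCoeff).comp Φ = Ideal.Quotient.mk _ ∧
      ∀ c : k, Φ (algebraMap k V c) = C (algebraMap k _ c) := by
  obtain ⟨σ, hσ, hσk, hσres⟩ := arc_coeff_family k V M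
  have hM : M = IsLocalRing.maximalIdeal V := IsLocalRing.eq_maximalIdeal inferInstance
  let _ : Field (V ⧸ M) := Ideal.Quotient.field _
  obtain ⟨π, hπ⟩ := IsDiscreteValuationRing.exists_irreducible V
  have hMπ : M = Ideal.span {π} := hM.trans hπ.maximalIdeal_eq
  have hMpow : ∀ n, M ^ n = Ideal.span {π ^ n} := fun n => by
    rw [hMπ, Ideal.span_singleton_pow]
  let T : ∀ n : ℕ, Polynomial (V ⧸ M) →+* V ⧸ M ^ n := fun n =>
    Polynomial.eval₂RingHom (σ n) (Ideal.Quotient.mk _ π)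
  have hT : ∀ (m n : ℕ) (h : m ≤ n) p, Ideal.Quotient.factorPow _ h (T n p) = T m p := by
    intro m n h p
    have : (Ideal.Quotient.factorPow M h).comp (T n) = T m := by
      refine Polynomial.ringHom_ext (fun a => ?_) ?_
      · simp [T, hσ]
      · simp [T]
    exact congr($this p)
  have hrep : ∀ n a, ∃ s : V, σ n a = Ideal.Quotient.mk _ s ∧ (n ≠ 0 → Ideal.Quotient.mk M s = a) := by
    intro n a
    obtain ⟨s, hs⟩ := Ideal.Quotient.mk_surjective (σ n a)
    obtain ⟨v, rfl⟩ := Ideal.Quotient.mk_surjective a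
    refine ⟨s, hs.symm, fun hn => ?_⟩
    exact (Ideal.Quotient.eq.mpr (hσres n v s hn hs.symm)).symm
  have hsurj : ∀ n (v : V), ∃ p, T n p = Ideal.Quotient.mk _ v := by
    intro n
    induction n with
    | zero =>
      intro v
      refine ⟨0, ?_⟩
      rw [map_zero, eq_comm, Ideal.Quotient.eq_zero_iff_mem, pow_zero, Ideal.one_eq_top]
      trivial
    | succ n ih =>
      intro v
      obtain ⟨p, hp⟩ := ih v
      obtain ⟨u, hu⟩ := Ideal.Quotient.mk_surjective (T (n + 1) p)
      have h1 : v - u ∈ M ^ n := by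
        rw [← Ideal.Quotient.eq, ← hp, ← hT n (n + 1) (Nat.le_succ n), ← hu]
        rfl
      rw [hMpow, Ideal.mem_span_singleton] at h1
      obtain ⟨w, hw⟩ := h1
      obtain ⟨s, hs, hs'⟩ := hrep (n + 1) (Ideal.Quotient.mk M w)
      refine ⟨p + Polynomial.C (Ideal.Quotient.mk M w) * Polynomial.X ^ n, ?_⟩
      have h2 : T (n + 1) (Polynomial.C (Ideal.Quotient.mk M w) * Polynomial.X ^ n) =
          Ideal.Quotient.mk _ (s * π ^ n) := by
        simp [T, hs]
      rw [map_add, h2, ← hu, ← map_add, Ideal.Quotient.eq]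
      have h3 : s - w ∈ M := Ideal.Quotient.eq.mp (hs' (by simp))
      rw [hMπ, Ideal.mem_span_singleton] at h3
      obtain ⟨c, hc⟩ := h3
      rw [hMpow, Ideal.mem_span_singleton]
      exact ⟨c, by linear_combination (-1) * hw + π ^ n * hc⟩
  have hconst : ∀ n p v, n ≠ 0 → T n p = Ideal.Quotient.mk _ v → Ideal.Quotient.mk M v = p.coeff 0 := by
    intro n p v hn h
    obtain ⟨s, hs, hs'⟩ := hrep n (p.coeff 0)
    rw [← hs' hn, Ideal.Quotient.eq]
    have h1 := congrArg (Ideal.Quotient.factorPow M (Nat.one_le_iff_ne_zero.mpr hn)) h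
    rw [hT] at h1
    have h2 := congrArg (Ideal.Quotient.factorPow M (Nat.one_le_iff_ne_zero.mpr hn)) hs
    rw [hσ] at h2
    have h3 : T 1 p = σ 1 (p.coeff 0) := by
      conv_lhs => rw [← Polynomial.divX_mul_X_add p]
      have h0 : (Ideal.Quotient.mk (M ^ 1)) π = 0 := by
        rw [Ideal.Quotient.eq_zero_iff_mem, hMpow]
        simp
      simp [T, h0]
    rw [← pow_one M, ← Ideal.Quotient.eq]
    exact h1.symm.trans (h3.trans h2)
  have hinj : ∀ n p, T n p = 0 → Polynomial.X ^ n ∣ p := by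
    intro n p h
    by_cases hp : p = 0
    · simp [hp]
    by_contra hnd
    obtain ⟨q, hq, hq0⟩ := Polynomial.exists_eq_pow_rootMultiplicity_mul_and_not_dvd p hp 0
    simp only [map_zero, sub_zero] at hq hq0
    set j := p.rootMultiplicity 0
    have hj : j < n := by
      by_contra hj
      exact hnd ((pow_dvd_pow _ (not_lt.mp hj)).trans ⟨q, hq⟩)
    obtain ⟨v, hv⟩ := Ideal.Quotient.mk_surjective (T n q)
    have h1 := hconst n q v (by omega) hv.symm
    have h2 : IsUnit v := by
      by_contra hvu
      have : v ∈ M := hM ▸ (IsLocalRing.mem_maximalIdeal v).mpr hvu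
      rw [Ideal.Quotient.eq_zero_iff_mem.mpr this] at h1
      exact hq0 (Polynomial.X_dvd_iff.mpr h1.symm)
    rw [hq, map_mul, ← hv, map_pow] at h
    have h3 : T n Polynomial.X = Ideal.Quotient.mk _ π := by simp [T]
    rw [h3, ← map_pow, ← map_mul, Ideal.Quotient.eq_zero_iff_mem, hMpow,
      Ideal.mem_span_singleton, h2.dvd_mul_right, pow_dvd_pow_iff hπ.ne_zero hπ.not_isUnit] at h
    omega
  let I : Ideal (PowerSeries (V ⧸ M)) := Ideal.span {X}
  have hex : ∀ n, ∃ H : V →+* PowerSeries (V ⧸ M) ⧸ I ^ n, ∀ p v, T n p = Ideal.Quotient.mk _ v →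
      H v = Ideal.Quotient.mk _ (p : PowerSeries (V ⧸ M)) := by
    intro n
    have hTs : Function.Surjective (T n) := fun y => by
      obtain ⟨v, rfl⟩ := Ideal.Quotient.mk_surjective y
      exact hsurj n v
    let H0 : Polynomial (V ⧸ M) →+* PowerSeries (V ⧸ M) ⧸ I ^ n :=
      (Ideal.Quotient.mk _).comp (Polynomial.coeToPowerSeries.ringHom)
    have hle : RingHom.ker (T n) ≤ RingHom.ker H0 := by
      intro p hp
      obtain ⟨q, rfl⟩ := hinj n p hp
      rw [RingHom.mem_ker]
      show Ideal.Quotient.mk _ (Polynomial.coeToPowerSeries.ringHom _) = _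
      rw [Ideal.Quotient.eq_zero_iff_mem, map_mul, map_pow]
      refine Ideal.mul_mem_right _ _ (Ideal.pow_mem_pow ?_ n)
      simp [I]
    refine ⟨((T n).liftOfSurjective hTs ⟨H0, hle⟩).comp (Ideal.Quotient.mk _), ?_⟩
    intro p v h
    rw [RingHom.comp_apply, ← h]
    exact RingHom.liftOfRightInverse_comp_apply _ _ _ ⟨H0, hle⟩ p
  choose H hH using hex
  have hcompat : ∀ {m n : ℕ} (hle : m ≤ n), (Ideal.Quotient.factorPow I hle).comp (H n) = H m := by
    intro m n hle
    ext1 v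
    obtain ⟨p, hp⟩ := hsurj n v
    have hp' : T m p = Ideal.Quotient.mk _ v := by
      rw [← hT m n hle, hp]; rfl
    rw [RingHom.comp_apply, hH n p v hp, hH m p v hp']
    rfl
  have hΦ := IsAdicComplete.mk_liftRingHom I H hcompat
  set Φ := IsAdicComplete.liftRingHom I H hcompat
  have hc : ∀ v, constantCoeff (Φ v) = Ideal.Quotient.mk _ v := by
    intro v
    obtain ⟨p, hp⟩ := hsurj 1 v
    have h1 := hΦ 1 v
    rw [hH 1 p v hp, Ideal.Quotient.eq, pow_one, Ideal.mem_span_singleton, X_dvd_iff, map_sub,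
      sub_eq_zero] at h1
    rw [h1, hconst 1 p v one_ne_zero hp]
    simp
  refine ⟨Φ, ?_, ?_, ?_⟩
  · have h1 : Φ π ≠ 0 := by
      intro h0
      have h1 := hΦ 2 π
      rw [hH 2 Polynomial.X π (by simp [T]), h0, Ideal.Quotient.eq, Ideal.span_singleton_pow,
        Ideal.mem_span_singleton, X_pow_dvd_iff] at h1
      have := h1 1 (by norm_num)
      simp at this
    rw [injective_iff_map_eq_zero]
    intro v hv
    by_contra hv0
    obtain ⟨n, u, rfl⟩ := IsDiscreteValuationRing.eq_unit_mul_pow_irreducible hv0 hπ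
    rw [map_mul, map_pow] at hv
    have := (u.isUnit.map Φ).ne_zero
    simp_all
  · ext1 v; exact hc v
  · intro c
    have : Φ (algebraMap k V c) - C (algebraMap k _ c) = 0 := by
      refine IsHausdorff.haus (I := I) inferInstance _ ?_
      intro n
      rw [SModEq.zero, smul_eq_mul, Ideal.mul_top, ← Ideal.Quotient.eq_zero_iff_mem, map_sub,
        hΦ, hH n (Polynomial.C (algebraMap k _ c)) _ (by simp [T, hσk])]
      simp
    exact sub_eq_zero.mp this

lemma arc_noetherian_closure (k R E : Type) [Field k] [CharZero k] [CommRing R] [IsDomain R]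
    [Algebra k R] [Algebra.FiniteType k R] [Field E] [Algebra R E] [IsFractionRing R E] :
    IsNoetherianRing (integralClosure R E) := by
  obtain ⟨s, g, hg, hfin⟩ := exists_finite_inj_algHom_of_fg k R
  let A := MvPolynomial (Fin s) k
  let _ : Algebra A R := g.toRingHom.toAlgebra
  let _ : Algebra A E := ((algebraMap R E).comp g.toRingHom).toAlgebra
  have : IsScalarTower A R E := IsScalarTower.of_algebraMap_eq fun _ => rfl
  have : Module.Finite A R := hfin
  have hinj : Function.Injective (algebraMap A E) :=
    (IsFractionRing.injective R E).comp hg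
  have : FaithfulSMul A R := (faithfulSMul_iff_algebraMap_injective A R).mpr hg
  have : FaithfulSMul A E := (faithfulSMul_iff_algebraMap_injective A E).mpr hinj
  let _ : Algebra (FractionRing A) E := FractionRing.liftAlgebra A E
  have : IsScalarTower A (FractionRing A) E := inferInstance
  have : FiniteDimensional (FractionRing A) E := Module.Finite.of_isLocalization A R (nonZeroDivisors A)
  have : CharZero (FractionRing A) := charZero_of_injective_algebraMap (algebraMap k (FractionRing A)).injective
  have h1 : IsNoetherianRing (integralClosure A E) :=
    IsIntegralClosure.isNoetherianRing A (FractionRing A) E (integralClosure A E)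
  let φ : integralClosure A E →+* integralClosure R E :=
    ((integralClosure A E).val.toRingHom).codRestrict (integralClosure R E)
      (fun x => by
        have : IsIntegral A (x : E) := x.2
        exact this.tower_top)
  refine isNoetherianRing_of_surjective _ _ φ ?_
  rintro ⟨x, hx⟩
  have hx' : IsIntegral A x := isIntegral_trans (R := A) (A := R) x hx
  exact ⟨⟨x, hx'⟩, rfl⟩

lemma arc_dvr_of_minimal (N : Type) [CommRing N] [IsDomain N] [IsNoetherianRing N]
    [IsIntegrallyClosed N] (f : N) (hf : f ≠ 0) (q : Ideal N) [q.IsPrime]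
    (hq : q ∈ (Ideal.span {f}).minimalPrimes) :
    IsDiscreteValuationRing (Localization.AtPrime q) := by
  have hht := Ideal.height_le_one_of_isPrincipal_of_mem_minimalPrimes _ q hq
  have hfq : f ∈ q := hq.1.2 (Ideal.mem_span_singleton_self f)
  have hq0 : q ≠ ⊥ := fun h => hf (by simpa [h] using hfq)
  have : IsIntegrallyClosed (Localization.AtPrime q) :=
    isIntegrallyClosed_of_isLocalization _ q.primeCompl q.primeCompl_le_nonZeroDivisors
  have hdim : Ring.KrullDimLE 1 (Localization.AtPrime q) := by
    rw [Ring.krullDimLE_iff, IsLocalization.AtPrime.ringKrullDim_eq_height q]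
    exact_mod_cast hht
  have hnf : ¬ IsField (Localization.AtPrime q) := by
    rw [IsLocalRing.isField_iff_maximalIdeal_eq]
    intro h
    have h1 : algebraMap N (Localization.AtPrime q) f ∈ IsLocalRing.maximalIdeal _ :=
      (IsLocalization.AtPrime.to_map_mem_maximal_iff _ q f).mpr hfq
    rw [h, Ideal.mem_bot] at h1
    exact hf (IsLocalization.injective (Localization.AtPrime q) q.primeCompl_le_nonZeroDivisors
      (h1.trans (map_zero _).symm))
  refine ((IsDiscreteValuationRing.TFAE _ hnf).out 0 2).mpr ?_
  have : Ring.DimensionLEOne (Localization.AtPrime q) := by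
    refine ⟨fun {P} hP hPp => ?_⟩
    exact Ring.krullDimLE_one_iff_of_isPrime_bot.mp hdim P hP hPp
  exact { }

lemma arc_dvr_exit (k R N : Type) [Field k] [CommRing R] [Algebra k R] [CommRing N] [IsDomain N]
    [Algebra k N] [IsNoetherianRing N] [IsIntegrallyClosed N] (p : Ideal R) (j0 : R →ₐ[k] N)
    (hj : Function.Injective j0) (f : N) (hf : f ≠ 0) (q : Ideal N) [q.IsPrime]
    (hq : q ∈ (Ideal.span {f}).minimalPrimes) (h : ∀ r, j0 r ∈ q ↔ r ∈ p) :
    ∃ (V : Type) (_ : CommRing V) (_ : IsDomain V) (_ : IsDiscreteValuationRing V) (_ : Algebra k V)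
      (j : R →ₐ[k] V), Function.Injective j ∧
        ∀ r, j r ∈ IsLocalRing.maximalIdeal V ↔ r ∈ p := by
  have := arc_dvr_of_minimal N f hf q hq
  refine ⟨Localization.AtPrime q, inferInstance, inferInstance, this, inferInstance,
    (IsScalarTower.toAlgHom k N (Localization.AtPrime q)).comp j0, ?_, ?_⟩
  · exact (IsLocalization.injective _ q.primeCompl_le_nonZeroDivisors).comp hj
  · intro r
    show algebraMap N _ (j0 r) ∈ _ ↔ _
    rw [IsLocalization.AtPrime.to_map_mem_maximal_iff _ q]
    exact h r

/-- A discrete valuation ring centered at a given nonzero prime. -/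
lemma arc_exists_dvr (k R : Type) [Field k] [CharZero k] [CommRing R] [IsDomain R]
    [Algebra k R] [Algebra.FiniteType k R] (p : Ideal R) [p.IsPrime] (hp : p ≠ ⊥) :
    ∃ (V : Type) (_ : CommRing V) (_ : IsDomain V) (_ : IsDiscreteValuationRing V) (_ : Algebra k V)
      (j : R →ₐ[k] V), Function.Injective j ∧
        ∀ r, j r ∈ IsLocalRing.maximalIdeal V ↔ r ∈ p := by
  classical
  let E := FractionRing R
  have hunit : ∀ y : p.primeCompl, IsUnit (algebraMap R E y) := fun y => by
    have : (y : R) ≠ 0 := fun h => y.2 (h ▸ p.zero_mem)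
    exact IsUnit.mk0 _ ((map_ne_zero_iff _ (IsFractionRing.injective R E)).mpr this)
  obtain ⟨W, hW, hWl⟩ := IsLocalRing.exists_factor_valuationRing
    (IsLocalization.lift (M := p.primeCompl) (S := Localization.AtPrime p) hunit)
  have hRW : ∀ r : R, algebraMap R E r ∈ W := fun r => by
    simpa using hW (algebraMap R _ r)
  have hcenter : ∀ r : R, W.valuation (algebraMap R E r) < 1 ↔ r ∈ p := by
    intro r
    rw [← IsLocalization.AtPrime.to_map_mem_maximal_iff (Localization.AtPrime p) p r,
      IsLocalRing.mem_maximalIdeal, mem_nonunits_iff,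
      ← isUnit_map_iff (RingHom.codRestrict _ W.toSubring hW)]
    have h2 : RingHom.codRestrict _ W.toSubring hW (algebraMap R _ r) =
      (⟨algebraMap R E r, hRW r⟩ : W) := by
      apply Subtype.ext; simp
    rw [h2]
    exact (W.valuation_lt_one_iff ⟨algebraMap R E r, hRW r⟩).symm.trans (IsLocalRing.mem_maximalIdeal _)
  have hnoeth : IsNoetherianRing R := Algebra.FiniteType.isNoetherianRing k R
  obtain ⟨s, hs⟩ := (isNoetherianRing_iff_ideal_fg R).mp hnoeth p
  have hsne : s.Nonempty := by
    by_contra h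
    rw [Finset.not_nonempty_iff_eq_empty] at h
    simp [h] at hs
    exact hp hs.symm
  obtain ⟨f, hfs, hfmax⟩ := s.exists_max_image (fun g => W.valuation (algebraMap R E g)) hsne
  have hf0 : f ≠ 0 := by
    rintro rfl
    apply hp
    rw [← hs, Ideal.span_eq_bot]
    intro g hg
    have := hfmax g hg
    simpa using this
  have hfp : f ∈ p := hs ▸ Ideal.subset_span hfs
  have hf0' : algebraMap R E f ≠ 0 := by simpa using hf0
  obtain ⟨t, ht⟩ := Algebra.FiniteType.out (R := k) (A := R)
  let S : Finset E := t.image (algebraMap R E) ∪ s.image (fun g => algebraMap R E g / algebraMap R E f)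
  let R' : Subalgebra k E := Algebra.adjoin k (S : Set E)
  have hR'ft : Algebra.FiniteType k R' := (Subalgebra.fg_iff_finiteType _).mp ⟨S, rfl⟩
  have hRR' : ∀ r : R, algebraMap R E r ∈ R' := by
    intro r
    have h1 : (IsScalarTower.toAlgHom k R E) r ∈ (Algebra.adjoin k (t : Set R)).map (IsScalarTower.toAlgHom k R E) :=
      ⟨r, by rw [ht]; trivial, rfl⟩
    rw [AlgHom.map_adjoin] at h1
    refine Algebra.adjoin_mono ?_ h1
    intro x hx
    simp only [S, Finset.coe_union, Finset.coe_image]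
    exact Or.inl hx
  let i : R →ₐ[k] R' := (IsScalarTower.toAlgHom k R E).codRestrict R' hRR'
  have hfrac : IsFractionRing R' E := by
    let _ : Algebra R R' := i.toRingHom.toAlgebra
    have : IsScalarTower R R' E := IsScalarTower.of_algebraMap_eq fun _ => rfl
    refine IsFractionRing.of_field _ _ fun z => ?_
    obtain ⟨a, b, _, h⟩ := IsFractionRing.div_surjective (A := R) z
    exact ⟨i a, i b, h.symm⟩
  let N := integralClosure R' E
  have hNn : IsNoetherianRing N := arc_noetherian_closure k R' E
  have hNi : IsIntegrallyClosed N :=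
    integralClosure.isIntegrallyClosedOfFiniteExtension E
  have hR'W : ∀ x ∈ R', x ∈ W := by
    intro x hx
    induction hx using Algebra.adjoin_induction with
    | mem x hx =>
      simp only [S, Finset.coe_union, Finset.coe_image] at hx
      rcases hx with ⟨r, _, rfl⟩ | ⟨g, hg, rfl⟩
      · exact hRW r
      · rw [← W.valuation_le_one_iff, map_div₀]
        exact div_le_one_of_le₀ (hfmax g hg) zero_le
    | algebraMap c =>
      rw [IsScalarTower.algebraMap_apply k R E]
      exact hRW _
    | add x y _ _ hx hy => exact W.add_mem _ _ hx hy
    | mul x y _ _ hx hy => exact W.mul_mem _ _ hx hy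
  have hNW : ∀ x ∈ N, x ∈ W := by
    intro x hx
    let _ : Algebra R' W := ((algebraMap R' E).codRestrict W.toSubring (fun x => hR'W x x.2)).toAlgebra
    have : IsScalarTower R' W E := IsScalarTower.of_algebraMap_eq fun _ => rfl
    have hx' : IsIntegral W x := IsIntegral.tower_top (show IsIntegral R' x from hx)
    obtain ⟨y, rfl⟩ := IsIntegrallyClosed.isIntegral_iff.mp hx'
    exact y.2
  let ν : N →+* W := (N.val.toRingHom).codRestrict W.toSubring (fun x => hNW x x.2)
  let m : Ideal N := (IsLocalRing.maximalIdeal W).comap ν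
  let j0 : R →ₐ[k] N := (IsScalarTower.toAlgHom k R' N).comp i
  have hj0 : ∀ r, ((j0 r : N) : E) = algebraMap R E r := fun r => rfl
  have hj0m : ∀ r, j0 r ∈ m ↔ r ∈ p := by
    intro r
    rw [← hcenter r, Ideal.mem_comap]
    exact W.valuation_lt_one_iff (ν (j0 r))
  have hmf : Ideal.span {j0 f} ≤ m := by
    rw [Ideal.span_singleton_le_iff_mem, hj0m]; exact hfp
  obtain ⟨q, hq, hqm⟩ := Ideal.exists_minimalPrimes_le hmf
  have hqp : q.IsPrime := hq.1.1
  have hjinj : Function.Injective j0 := by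
    intro a b h
    apply IsFractionRing.injective R E
    rw [← hj0, ← hj0, h]
  have hjf : j0 f ≠ 0 := by
    intro h; exact hf0 (hjinj (h.trans (map_zero j0).symm))
  have hle : ∀ r ∈ p, j0 r ∈ q := by
    intro r h
    have hle : p ≤ q.comap j0.toRingHom := by
      rw [← hs, Ideal.span_le]
      intro g hg
      have hgR' : algebraMap R E g / algebraMap R E f ∈ R' := by
        apply Algebra.subset_adjoin
        simp only [S, Finset.coe_union, Finset.coe_image]
        exact Or.inr ⟨g, hg, rfl⟩
      have h1 : j0 g = algebraMap R' N ⟨_, hgR'⟩ * j0 f := by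
        apply Subtype.ext
        show algebraMap R E g = (algebraMap R E g / algebraMap R E f) * algebraMap R E f
        exact (div_mul_cancel₀ _ hf0').symm
      show j0 g ∈ q
      rw [h1]
      exact Ideal.mul_mem_left _ _ (hq.1.2 (Ideal.mem_span_singleton_self _))
    exact hle h
  exact arc_dvr_exit k R N p j0 hjinj (j0 f) hjf q hq
    (fun r => ⟨fun h => (hj0m r).mp (hqm h), hle r⟩)

lemma arc_amalgam {κ₀ κ L : Type} [Field κ₀] [Field κ] [Field L] (a : κ₀ →+* κ) (b : κ₀ →+* L) :
    ∃ (K' : Type) (_ : Field K') (i : κ →+* K') (j : L →+* K'), i.comp a = j.comp b := by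
  let _ : Algebra κ₀ κ := a.toAlgebra
  let _ : Algebra κ₀ L := b.toAlgebra
  obtain ⟨M, hM⟩ := Ideal.exists_maximal (TensorProduct κ₀ κ L)
  refine ⟨TensorProduct κ₀ κ L ⧸ M, Ideal.Quotient.field M,
    (Ideal.Quotient.mk M).comp (Algebra.TensorProduct.includeLeft (R := κ₀) (S := κ₀)).toRingHom,
    (Ideal.Quotient.mk M).comp (Algebra.TensorProduct.includeRight (R := κ₀)).toRingHom, ?_⟩
  ext x
  have h1 := (Algebra.TensorProduct.includeLeft (R := κ₀) (S := κ₀) (A := κ) (B := L)).commutes x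
  have h2 := (Algebra.TensorProduct.includeRight (R := κ₀) (A := κ) (B := L)).commutes x
  exact congrArg (Ideal.Quotient.mk M) (h1.trans h2.symm)

open scoped IntermediateField.algebraAdjoinAdjoin in
lemma arc_etale_field (k E : Type) [Field k] [CharZero k] [Field E] [Algebra k E] :
    ∃ s : Set E, 
      @Algebra.FormallyEtale (MvPolynomial s k) E _ _
        (MvPolynomial.aeval (R := k) (fun x : s => (x : E))).toRingHom.toAlgebra := by
  obtain ⟨s, hs⟩ := exists_isTranscendenceBasis k E
  refine ⟨s, ?_⟩
  have h := hs.isAlgebraic_field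
  let A0 := Algebra.adjoin k (Set.range ((↑) : s → E))
  let F0 := IntermediateField.adjoin k (Set.range ((↑) : s → E))
  have : Algebra.IsSeparable F0 E := inferInstance
  have h1 : Algebra.FormallyEtale F0 E := Algebra.FormallyEtale.of_isSeparable F0 E
  have h2 : Algebra.FormallyEtale A0 F0 := .of_isLocalization (nonZeroDivisors _)
  have h3 : Algebra.FormallyEtale A0 E := .comp A0 F0 E
  let _ : Algebra (MvPolynomial s k) E :=
    (MvPolynomial.aeval (R := k) (fun x : s => (x : E))).toRingHom.toAlgebra
  let _ : Algebra (MvPolynomial s k) A0 := (hs.1.aevalEquiv).toRingEquiv.toRingHom.toAlgebra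
  have : IsScalarTower (MvPolynomial s k) A0 E := IsScalarTower.of_algebraMap_eq fun x => by
    exact (hs.1.algebraMap_aevalEquiv x).symm
  have h4 : Algebra.FormallyEtale (MvPolynomial s k) A0 :=
    .of_equiv (AlgEquiv.ofRingEquiv (f := hs.1.aevalEquiv.toRingEquiv) (fun x => rfl) :
      MvPolynomial s k ≃ₐ[MvPolynomial s k] A0)
  exact .comp _ A0 E

lemma arc_extend_fraction {R F : Type} [CommRing R] [IsDomain R] [Field F]
    (γ : R →+* F⟦X⟧) (hγ : Function.Injective ((constantCoeff (R := F)).comp γ)) :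
    ∃ γ' : FractionRing R →+* F⟦X⟧, γ'.comp (algebraMap R (FractionRing R)) = γ := by
  have hu : ∀ y : nonZeroDivisors R, IsUnit (γ y) := by
    intro y
    rw [PowerSeries.isUnit_iff_constantCoeff]
    refine IsUnit.mk0 _ fun h => nonZeroDivisors.coe_ne_zero y (hγ ?_)
    simpa using h
  exact ⟨IsLocalization.lift hu, IsLocalization.lift_comp hu⟩

/-- The generic arc. -/
lemma arc_generic (k R : Type) [Field k] [CharZero k] [CommRing R] [IsDomain R] [Algebra k R] :
    ∃ (B : Type) (_ : CommRing B) (_ : IsDomain B) (_ : Algebra k B) (θ : R →ₐ[k] B⟦X⟧),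
      ∀ (F : Type) [Field F] [Algebra k F] (γ : R →ₐ[k] F⟦X⟧),
        Function.Injective ((constantCoeff (R := F)).comp γ.toRingHom) →
        ∃ f : B →ₐ[k] F, (psMapAlgHom f).comp θ = γ := by
  let E := FractionRing R
  obtain ⟨s, hs⟩ := arc_etale_field k E
  let P := MvPolynomial s k
  let _ : Algebra P E := (MvPolynomial.aeval (R := k) (fun x : s => (x : E))).toRingHom.toAlgebra
  have hs' : Algebra.FormallyEtale P E := hs
  have hPE : ∀ p : P, algebraMap P E p = MvPolynomial.aeval (R := k) (fun x : s => (x : E)) p :=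
    fun _ => rfl
  have hPC : ∀ c : k, algebraMap P E (MvPolynomial.C c) = algebraMap k E c := by
    intro c; simp [hPE]
  have hPX : ∀ x : s, algebraMap P E (MvPolynomial.X x) = x := by
    intro x; simp [hPE]
  let B := MvPolynomial (s × ℕ) E
  let ser : s → B⟦X⟧ := fun x => PowerSeries.mk fun n => 
    Nat.casesOn n (MvPolynomial.C (x : E)) (fun j => MvPolynomial.X (x, j))
  let a : P →ₐ[k] B⟦X⟧ := MvPolynomial.aeval ser
  let b : E →+* B := MvPolynomial.C
  have hCk : ∀ c : k, b (algebraMap k E c) = algebraMap k B c := fun c => rfl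
  obtain ⟨d, hd1, hd2⟩ := arc_lift_ps (A := P) (B := E) a.toRingHom b (by
    apply MvPolynomial.ringHom_ext
    · intro c
      rw [RingHom.comp_apply, RingHom.comp_apply, hPC]
      show _ = constantCoeff (a (algebraMap k P c))
      rw [AlgHom.commutes, hCk, PowerSeries.algebraMap_apply, PowerSeries.constantCoeff_C]
    · intro x
      rw [RingHom.comp_apply, RingHom.comp_apply, hPX]
      show _ = constantCoeff (a (MvPolynomial.X x))
      rw [MvPolynomial.aeval_X, ← PowerSeries.coeff_zero_eq_constantCoeff_apply,
        PowerSeries.coeff_mk]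
      rfl)
  have hdk : ∀ c : k, d (algebraMap k E c) = algebraMap k B⟦X⟧ c := by
    intro c
    have := congr($hd1 (MvPolynomial.C c))
    rw [RingHom.comp_apply, hPC] at this
    exact this.trans (a.commutes c)
  let θ : R →ₐ[k] B⟦X⟧ :=
    { d.comp (algebraMap R E) with
      commutes' := fun c => by
        show d (algebraMap R E (algebraMap k R c)) = _
        rw [← IsScalarTower.algebraMap_apply k R E, hdk] }
  refine ⟨B, inferInstance, inferInstance, inferInstance, θ, ?_⟩
  intro F _ _ γ hγ
  obtain ⟨γ', hγ'⟩ := arc_extend_fraction γ.toRingHom hγ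
  have hγ'k : ∀ c : k, γ' (algebraMap k E c) = algebraMap k F⟦X⟧ c := by
    intro c
    have := congr($hγ' (algebraMap k R c))
    rw [IsScalarTower.algebraMap_apply k R E]
    exact this.trans (γ.commutes c)
  let f : B →ₐ[k] F :=
    { MvPolynomial.eval₂Hom ((constantCoeff (R := F)).comp γ')
        (fun x : s × ℕ => coeff (x.2 + 1) (γ' (x.1 : E))) with
      commutes' := fun c => by
        show MvPolynomial.eval₂Hom _ _ (MvPolynomial.C (algebraMap k E c)) = _
        rw [MvPolynomial.eval₂Hom_C, RingHom.comp_apply, hγ'k]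
        simp [PowerSeries.algebraMap_apply] }
  have hfC : ∀ x : E, f (MvPolynomial.C x) = constantCoeff (γ' x) := fun x =>
    MvPolynomial.eval₂Hom_C _ _ x
  have hfX : ∀ x : s × ℕ, f (MvPolynomial.X x) = coeff (x.2 + 1) (γ' (x.1 : E)) := fun x =>
    MvPolynomial.eval₂Hom_X' _ _ x
  refine ⟨f, ?_⟩
  have key : (psMapAlgHom f).toRingHom.comp d = γ' := by
    apply arc_lift_unique (A := P)
    · rw [RingHom.comp_assoc, hd1]
      apply MvPolynomial.ringHom_ext
      · intro c
        have h1 : algebraMap P E (MvPolynomial.C c) = algebraMap k E c := by simp [hPE]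
        rw [RingHom.comp_apply, RingHom.comp_apply, h1, hγ'k]
        show psMapAlgHom f (a (algebraMap k P c)) = _
        rw [AlgHom.commutes, AlgHom.commutes]
      · intro x
        have h1 : algebraMap P E (MvPolynomial.X x) = x := by simp [hPE]
        rw [RingHom.comp_apply, RingHom.comp_apply, h1]
        show PowerSeries.map f.toRingHom (a (MvPolynomial.X x)) = _
        rw [MvPolynomial.aeval_X]
        ext n
        rw [PowerSeries.coeff_map, PowerSeries.coeff_mk]
        cases n with
        | zero => exact (hfC x).trans (by simp)
        | succ n => exact hfX (x, n)
    · ext x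
      show constantCoeff (PowerSeries.map f.toRingHom (d x)) = _
      rw [← PowerSeries.coeff_zero_eq_constantCoeff_apply, PowerSeries.coeff_map,
        PowerSeries.coeff_zero_eq_constantCoeff_apply]
      have := congr($hd2 x)
      rw [RingHom.comp_apply] at this
      rw [this]
      exact hfC x
  ext1 r
  have h1 := congr($key (algebraMap R E r))
  have h2 := congr($hγ' r)
  exact h1.trans h2

lemma arc_coeff_psMap {k A B : Type} [CommRing k] [CommRing A] [CommRing B]
    [Algebra k A] [Algebra k B] (f : A →ₐ[k] B) (n : ℕ) (φ : A⟦X⟧) :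
    coeff n (psMapAlgHom f φ) = f (coeff n φ) :=
  PowerSeries.coeff_map _ _ _

/-- The constant coefficient as an algebra homomorphism. -/
noncomputable def arcConst (k A : Type) [CommRing k] [CommRing A] [Algebra k A] : A⟦X⟧ →ₐ[k] A :=
  { constantCoeff (R := A) with
    commutes' := fun c => by simp [PowerSeries.algebraMap_apply] }

lemma arc_step1 (k R K : Type) [Field k] [CommRing R] [Algebra k R] [Field K] [Algebra k K]
    (γ : R →ₐ[k] K⟦X⟧) :
    ∃ (L : Type) (_ : Field L) (_ : Algebra k L) (D : Type) (_ : CommRing D) (_ : Algebra k D)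
      (γ1 : R →ₐ[k] D⟦X⟧) (ε : D →ₐ[k] K) (ι : D →ₐ[k] L),
      Function.Injective ι ∧ (psMapAlgHom ε).comp γ1 = γ ∧
      ∀ r, constantCoeff (psMapAlgHom ι (γ1 r)) = 0 → psMapAlgHom ι (γ1 r) = 0 := by
  have hT0 : ∀ f : K⟦X⟧, coeff 0 (arcTaylor K f) = f := by
    intro f; ext m; simp [arcTaylor]
  have hTe : ∀ (f : K⟦X⟧) n, coeff 0 (coeff n (arcTaylor K f)) = coeff n f := by
    intro f n; simp [arcTaylor]
  let γ1 : R →ₐ[k] K⟦X⟧⟦X⟧ :=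
    { (arcTaylor K).comp γ.toRingHom with
      commutes' := fun c => by
        show arcTaylor K (γ (algebraMap k R c)) = _
        rw [AlgHom.commutes]
        ext n m
        rcases n with _ | n
        · rw [hT0]; simp [PowerSeries.algebraMap_apply]
        · simp [PowerSeries.algebraMap_apply, arcTaylor, coeff_C] }
  refine ⟨FractionRing K⟦X⟧, inferInstance, inferInstance, K⟦X⟧, inferInstance, inferInstance,
    γ1, arcConst k K, IsScalarTower.toAlgHom k K⟦X⟧ (FractionRing K⟦X⟧), 
    IsFractionRing.injective K⟦X⟧ (FractionRing K⟦X⟧), ?_, ?_⟩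
  · ext r n
    rw [AlgHom.comp_apply, arc_coeff_psMap]
    show constantCoeff (coeff n (arcTaylor K (γ r))) = _
    rw [← coeff_zero_eq_constantCoeff_apply, hTe]
  · intro r h
    rw [← coeff_zero_eq_constantCoeff_apply, arc_coeff_psMap] at h
    have h1 : coeff 0 (arcTaylor K (γ r)) = 0 :=
      IsFractionRing.injective K⟦X⟧ (FractionRing K⟦X⟧) (h.trans (map_zero _).symm)
    rw [hT0] at h1
    have : γ1 r = 0 := by
      show arcTaylor K (γ r) = 0
      rw [h1, map_zero]
    rw [this, map_zero]

lemma arc_step2 (k R L : Type) [Field k] [CharZero k] [CommRing R] [IsDomain R] [Algebra k R]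
    [Algebra.FiniteType k R] [Field L] [Algebra k L]
    (γ : R →ₐ[k] L⟦X⟧) (hγ : ∀ r, constantCoeff (γ r) = 0 → γ r = 0) :
    ∃ (F : Type) (_ : Field F) (_ : Algebra k F) (D : Type) (_ : CommRing D) (_ : Algebra k D)
      (K' : Type) (_ : Field K') (_ : Algebra k K')
      (γ3 : R →ₐ[k] D⟦X⟧) (ε : D →ₐ[k] K') (ι : D →ₐ[k] F) (j : L →ₐ[k] K'),
      Function.Injective ι ∧ (psMapAlgHom ε).comp γ3 = (psMapAlgHom j).comp γ ∧
      Function.Injective ((constantCoeff (R := F)).comp ((psMapAlgHom ι).comp γ3).toRingHom) := by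
  let p : Ideal R := RingHom.ker ((constantCoeff (R := L)).comp γ.toRingHom)
  have hpmem : ∀ r, r ∈ p ↔ constantCoeff (γ r) = 0 := fun r => Iff.rfl
  by_cases hp : p = ⊥
  · refine ⟨L, inferInstance, inferInstance, L, inferInstance, inferInstance, L, inferInstance,
      inferInstance, γ, AlgHom.id k L, AlgHom.id k L, AlgHom.id k L, fun _ _ h => h, rfl, ?_⟩
    rw [injective_iff_map_eq_zero]
    intro r hr
    have h1 : r ∈ p := by
      rw [hpmem]
      have h2 : coeff 0 (psMapAlgHom (AlgHom.id k L) (γ r)) = 0 := by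
        rw [coeff_zero_eq_constantCoeff_apply]; exact hr
      rw [arc_coeff_psMap] at h2
      rw [← coeff_zero_eq_constantCoeff_apply]; exact h2
    rw [hp] at h1
    exact h1
  have hpp : p.IsPrime := RingHom.ker_isPrime _
  obtain ⟨V, _, _, _, _, jV, hjV, hjp⟩ := arc_exists_dvr k R p hp
  obtain ⟨Φ, hΦ, hΦ0, hΦk⟩ := arc_dvr_embed k V (IsLocalRing.maximalIdeal V)
  let κ := V ⧸ IsLocalRing.maximalIdeal V
  let _ : Field κ := Ideal.Quotient.field _
  let κ₀ := FractionRing (R ⧸ p)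
  let g0 : R ⧸ p →+* L⟦X⟧ := Ideal.Quotient.lift p γ.toRingHom (fun r hr => hγ r hr)
  obtain ⟨g, hg⟩ := arc_extend_fraction g0 (by
    rw [injective_iff_map_eq_zero]
    intro r
    obtain ⟨r, rfl⟩ := Ideal.Quotient.mk_surjective r
    intro h
    exact Ideal.Quotient.eq_zero_iff_mem.mpr h)
  let a0 : R ⧸ p →+* κ := Ideal.Quotient.lift p ((Ideal.Quotient.mk _).comp jV.toRingHom)
    (fun r hr => Ideal.Quotient.eq_zero_iff_mem.mpr ((hjp r).mpr hr))
  have ha0 : Function.Injective a0 := by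
    rw [injective_iff_map_eq_zero]
    intro r
    obtain ⟨r, rfl⟩ := Ideal.Quotient.mk_surjective r
    intro h
    exact Ideal.Quotient.eq_zero_iff_mem.mpr ((hjp r).mp (Ideal.Quotient.eq_zero_iff_mem.mp h))
  let a : κ₀ →+* κ := IsFractionRing.lift ha0
  let q : R →+* κ₀ := (algebraMap (R ⧸ p) κ₀).comp (Ideal.Quotient.mk p)
  have ha : ∀ r, a (q r) = Ideal.Quotient.mk _ (jV r) := fun r =>
    IsFractionRing.lift_algebraMap ha0 _
  have hgq : ∀ r, g (q r) = γ r := fun r => congr($hg (Ideal.Quotient.mk p r))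
  obtain ⟨K', _, i, j, hij⟩ := arc_amalgam a ((constantCoeff (R := L)).comp g)
  let _ : Algebra κ₀ κ := a.toAlgebra
  have : CharZero κ₀ := by
    exact charZero_of_injective_ringHom (q.comp (algebraMap k R)).injective
  have := arc_formallySmooth_field κ₀ κ
  obtain ⟨δ, hδ1, hδ2⟩ := arc_lift_ps (A := κ₀) (B := κ) ((PowerSeries.map j).comp g) i (by
    refine Eq.trans hij ?_
    ext x
    simp [← coeff_zero_eq_constantCoeff_apply, -coeff_zero_eq_constantCoeff])
  have hδq : ∀ r, δ (Ideal.Quotient.mk _ (jV r)) = PowerSeries.map j (γ r) := fun r => by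
    rw [← ha, ← hgq]; exact congr($hδ1 (q r))
  let _ : Algebra k K' := (j.comp (algebraMap k L)).toAlgebra
  let jA : L →ₐ[k] K' := { j with commutes' := fun c => rfl }
  let H : R →+* K'⟦X⟧⟦X⟧ := (arcSwap K').comp ((PowerSeries.map δ).comp (Φ.comp jV.toRingHom))
  have hH : ∀ r n m, coeff m (coeff n (H r)) = coeff n (δ (coeff m (Φ (jV r)))) := by
    intro r n m
    simp [H, arcSwap]
  let γ3 : R →ₐ[k] K'⟦X⟧⟦X⟧ :=
    { H with
      commutes' := fun c => by
        show H (algebraMap k R c) = _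
        have h1 : δ (algebraMap k κ c) = C (algebraMap k K' c) := by
          have : algebraMap k κ c = Ideal.Quotient.mk _ (jV (algebraMap k R c)) := by
            rw [AlgHom.commutes]; rfl
          rw [this, hδq, AlgHom.commutes, PowerSeries.algebraMap_apply, PowerSeries.map_C]
          rfl
        have h1' : δ (algebraMap k (V ⧸ IsLocalRing.maximalIdeal V) c) = C (algebraMap k K' c) := h1
        ext n m
        rw [hH, AlgHom.commutes, hΦk, PowerSeries.algebraMap_apply, PowerSeries.algebraMap_apply]
        simp only [coeff_C]
        rcases m with _ | m <;> rcases n with _ | n <;> simp [h1', coeff_C] }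
  refine ⟨FractionRing K'⟦X⟧, inferInstance, inferInstance, K'⟦X⟧, inferInstance, inferInstance,
    K', inferInstance, inferInstance,
    γ3, arcConst k K', IsScalarTower.toAlgHom k K'⟦X⟧ (FractionRing K'⟦X⟧), jA,
    IsFractionRing.injective K'⟦X⟧ (FractionRing K'⟦X⟧), ?_, ?_⟩
  · ext r n
    rw [AlgHom.comp_apply, AlgHom.comp_apply, arc_coeff_psMap, arc_coeff_psMap]
    show constantCoeff (coeff n (H r)) = j (coeff n (γ r))
    rw [← coeff_zero_eq_constantCoeff_apply, hH, coeff_zero_eq_constantCoeff_apply]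
    have h1 : constantCoeff (Φ (jV r)) = Ideal.Quotient.mk _ (jV r) := congr($hΦ0 (jV r))
    rw [h1, hδq, PowerSeries.coeff_map]
  · rw [injective_iff_map_eq_zero]
    intro r hr
    have h2 : coeff 0 (psMapAlgHom (IsScalarTower.toAlgHom k K'⟦X⟧ (FractionRing K'⟦X⟧)) (γ3 r)) = 0 := by
      rw [coeff_zero_eq_constantCoeff_apply]; exact hr
    rw [arc_coeff_psMap] at h2
    have h3 : coeff 0 (H r) = 0 :=
      IsFractionRing.injective K'⟦X⟧ (FractionRing K'⟦X⟧) (h2.trans (map_zero _).symm)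
    apply hjV
    apply hΦ
    rw [map_zero, map_zero]
    ext m
    have h4 := hH r 0 m
    rw [h3, coeff_zero_eq_constantCoeff_apply] at h4
    have h5 : constantCoeff (δ (coeff m (Φ (jV r)))) = i (coeff m (Φ (jV r))) := congr($hδ2 _)
    rw [h5, map_zero] at h4
    rw [map_zero]
    exact i.injective (h4.symm.trans (map_zero i).symm)

end ArcHelpers

/-- Let `k` be an algebraically closed field of characteristic zero and
`R` a finitely generated commutative `k`-algebra that is an integral domain. If `R_∞`
corepresents the arc functor `A ↦ Hom_{k-alg}(R, A[[t]])` (naturally in `A`), then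
`Spec R_∞` is an irreducible topological space. (Affine form of: in characteristic zero
the space of arcs of a variety is irreducible.) -/
theorem arc_space_irreducible_of_char_zero (k : Type) [Field k] [IsAlgClosed k]
    [CharZero k] (R : Type) [CommRing R] [IsDomain R] [Algebra k R]
    (hR : Algebra.FiniteType k R)
    (Rinf : Type) [CommRing Rinf] [Algebra k Rinf]
    (e : ∀ (A : Type) [CommRing A] [Algebra k A], (Rinf →ₐ[k] A) ≃ (R →ₐ[k] PowerSeries A))
    (enat : ∀ (A B : Type) [CommRing A] [Algebra k A] [CommRing B] [Algebra k B]
      (f : A →ₐ[k] B) (φ : Rinf →ₐ[k] A),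
      e B (f.comp φ) = (psMapAlgHom f).comp (e A φ)) :
    IrreducibleSpace (PrimeSpectrum Rinf) := by
  have hsymm : ∀ (A B : Type) [CommRing A] [Algebra k A] [CommRing B] [Algebra k B]
      (f : A →ₐ[k] B) (α : R →ₐ[k] PowerSeries A) (x : Rinf),
      (e B).symm ((psMapAlgHom f).comp α) x = f ((e A).symm α x) := by
    intro A B _ _ _ _ f α x
    have h : (e B).symm ((psMapAlgHom f).comp α) = f.comp ((e A).symm α) := by
      rw [Equiv.symm_apply_eq, enat, Equiv.apply_symm_apply]
    rw [h]
    rfl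
  obtain ⟨B, _, _, _, θ, hθ⟩ := arc_generic k R
  have hmain : ∀ (P : Ideal Rinf), P.IsPrime → ∀ x, (e B).symm θ x = 0 → x ∈ P := by
    intro P hP x hx
    let K := FractionRing (Rinf ⧸ P)
    let π : Rinf →ₐ[k] K := (IsScalarTower.toAlgHom k (Rinf ⧸ P) K).comp (Ideal.Quotient.mkₐ k P)
    obtain ⟨L, _, _, D, _, _, γ1, ε, ι, hι, hγ1, hc⟩ := arc_step1 k R K (e K π)
    obtain ⟨F, _, _, D', _, _, K', _, _, γ3, ε', ι', j, hι', hγ3, hinj⟩ :=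
      arc_step2 k R L ((psMapAlgHom ι).comp γ1) hc
    obtain ⟨f, hf⟩ := hθ F ((psMapAlgHom ι').comp γ3) hinj
    have h1 : (e F).symm ((psMapAlgHom ι').comp γ3) x = 0 := by
      rw [← hf, hsymm, hx, map_zero]
    rw [hsymm] at h1
    have h2 : (e D').symm γ3 x = 0 := hι' (h1.trans (map_zero ι').symm)
    have h3 : (e K').symm ((psMapAlgHom j).comp ((psMapAlgHom ι).comp γ1)) x = 0 := by
      rw [← hγ3, hsymm, h2, map_zero]
    rw [hsymm, hsymm] at h3
    have h4 : ι ((e D).symm γ1 x) = 0 :=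
      j.toRingHom.injective (h3.trans (map_zero j).symm)
    have h5 : (e D).symm γ1 x = 0 := hι (h4.trans (map_zero ι).symm)
    have h6 : (e K).symm (e K π) x = 0 := by
      rw [← hγ1, hsymm, h5, map_zero]
    rw [Equiv.symm_apply_apply] at h6
    have h7 : (Ideal.Quotient.mk P x) = 0 :=
      IsFractionRing.injective (Rinf ⧸ P) K (h6.trans (map_zero _).symm)
    exact Ideal.Quotient.eq_zero_iff_mem.mp h7
  rw [PrimeSpectrum.irreducibleSpace_iff_isPrime_nilradical]
  have hker : (RingHom.ker ((e B).symm θ).toRingHom).IsPrime := RingHom.ker_isPrime _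
  have : nilradical Rinf = RingHom.ker ((e B).symm θ).toRingHom := by
    apply le_antisymm
    · exact nilradical_le_prime _
    · rw [nilradical_eq_sInf]
      exact le_sInf fun P hP x hx => hmain P hP x hx
  rw [this]
  exact hker
end

section
/- Let k be an algebraically closed field, X an integral scheme of finite type over k, K ⊇ k a field extension, and α : Spec K[[t]] → X a morphism of k-schemes. Let 0 denote the closed point of Spec K[[t]] and x = α(0). Then the induced homomorphism on stalks α* : O_{X,x} → O_{Spec K[[t]], 0} is injective if and only if α is a fat arc, i.e., there is no proper closed subset Z ⊊ X containing the set-theoretic image of α; equivalently, the image under α of the generic point of Spec K[[t]] is the generic point of X. -/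
open AlgebraicGeometry CategoryTheory Limits

/-- Let `X` be an integral scheme of finite type over an algebraically
closed field `k`, `K ⊇ k` a field extension, and `α : Spec K[[t]] → X` a `k`-morphism,
with `x = α(0)` the image of the closed point. Then the stalk map
`α* : O_{X,x} → O_{Spec K[[t]],0}` is injective if and only if `α` is a fat arc (no
proper closed subset of `X` contains the image of `α`), which is in turn equivalent to:
`α` maps the generic point of `Spec K[[t]]` to the generic point of `X`. -/
theorem fat_arc_iff_stalkMap_injective (k : Type) [Field k] [IsAlgClosed k]
    (X : Scheme) (sX : X ⟶ Spec (CommRingCat.of k)) [IsIntegral X]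
    [LocallyOfFiniteType sX] [QuasiCompact sX]
    (K : Type) [Field K] [Algebra k K]
    (α : Spec (CommRingCat.of (PowerSeries K)) ⟶ X)
    (hα : α ≫ sX = Spec.map (CommRingCat.ofHom (algebraMap k (PowerSeries K)))) :
    (Function.Injective
        (α.stalkMap (IsLocalRing.closedPoint (PowerSeries K) : PrimeSpectrum (PowerSeries K))) ↔
      ¬∃ Z : Set X, IsClosed Z ∧ Z ≠ Set.univ ∧ Set.range α.base ⊆ Z) ∧
    ((¬∃ Z : Set X, IsClosed Z ∧ Z ≠ Set.univ ∧ Set.range α.base ⊆ Z) ↔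
      α.base (⟨⊥, Ideal.bot_prime⟩ : PrimeSpectrum (PowerSeries K)) = genericPoint X) := by
  have hspec : ∀ p : Spec (CommRingCat.of (PowerSeries K)),
      (show Spec (CommRingCat.of (PowerSeries K)) from
        (⟨⊥, Ideal.bot_prime⟩ : PrimeSpectrum (PowerSeries K))) ⤳ p := by
    intro p
    refine (PrimeSpectrum.le_iff_specializes _ _).mp ?_
    exact (bot_le : (⊥ : Ideal (PowerSeries K)) ≤ _)
  haveI : IsDomain (CommRingCat.of (PowerSeries K)) :=
    inferInstanceAs (IsDomain (PowerSeries K))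
  refine ⟨⟨?_, ?_⟩, ⟨?_, ?_⟩⟩
  · rintro hinj ⟨Z, hZ, hne, hr⟩
    obtain ⟨U, hU, hxU, -⟩ := exists_isAffineOpen_mem_and_subset
      (x := α (IsLocalRing.closedPoint (PowerSeries K) : PrimeSpectrum (PowerSeries K)))
      (U := ⊤) trivial
    have hne' : (Zᶜ).Nonempty := Set.nonempty_compl.mpr hne
    obtain ⟨p, hpU, hpZ⟩ := nonempty_preirreducible_inter U.isOpen hZ.isOpen_compl ⟨_, hxU⟩ hne'
    obtain ⟨f, hf, hpf⟩ := hU.exists_basicOpen_le (V := ⟨Zᶜ, hZ.isOpen_compl⟩) ⟨p, hpZ⟩ hpU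
    have h0 : α.app U f = 0 := by
      rw [← basicOpen_eq_bot_iff, ← Scheme.preimage_basicOpen]
      refine le_bot_iff.mp fun q hq => ?_
      exact hf hq (hr ⟨q, rfl⟩)
    have hg : X.presheaf.germ U _ hxU f = 0 := by
      apply hinj
      rw [map_zero]
      refine (Scheme.Hom.germ_stalkMap_apply α U _ hxU f).trans ?_
      rw [h0, map_zero]
    have hf0 : f = 0 := germ_injective_of_isIntegral X _ hxU (by rw [hg, map_zero])
    rw [hf0, Scheme.basicOpen_zero] at hpf
    exact hpf
  · intro hfat
    rw [injective_iff_map_eq_zero]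
    intro s hs
    obtain ⟨U, hxU, f, rfl⟩ := X.presheaf.exists_germ_eq s
    have h1 := (Scheme.Hom.germ_stalkMap_apply α U _ hxU f).symm.trans hs
    have h0 : α.app U f = 0 :=
      germ_injective_of_isIntegral (Spec (CommRingCat.of (PowerSeries K)))
        (U := α ⁻¹ᵁ U) (IsLocalRing.closedPoint (PowerSeries K) : PrimeSpectrum (PowerSeries K))
        hxU (h1.trans (map_zero _).symm)
    have hb : α ⁻¹ᵁ (X.basicOpen f) = ⊥ := by
      rw [Scheme.preimage_basicOpen, h0, Scheme.basicOpen_zero]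
    have hf0 : f = 0 := by
      rw [← basicOpen_eq_bot_iff]
      by_contra hc
      refine hfat ⟨(X.basicOpen f : Set X)ᶜ, (X.basicOpen f).isOpen.isClosed_compl, ?_, ?_⟩
      · intro h
        apply hc
        ext1
        simpa using h
      · rintro _ ⟨q, rfl⟩ hq
        have : q ∈ α ⁻¹ᵁ (X.basicOpen f) := hq
        rw [hb] at this
        exact this
    rw [hf0, map_zero]
  · intro hfat
    have hu : closure {α.base (⟨⊥, Ideal.bot_prime⟩ : PrimeSpectrum (PowerSeries K))} =
        (Set.univ : Set X) := by
      by_contra hc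
      refine hfat ⟨_, isClosed_closure, hc, ?_⟩
      rintro _ ⟨q, rfl⟩
      exact ((hspec q).map α.continuous).mem_closure
    exact IsGenericPoint.eq hu (genericPoint_spec X)
  · rintro h ⟨Z, hZ, hne, hr⟩
    apply hne
    have hm : genericPoint X ∈ Z := h ▸ hr ⟨_, rfl⟩
    rw [Set.eq_univ_iff_forall]
    intro y
    exact (genericPoint_specializes y).mem_closed hZ hm
end
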